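/- Let M(i,j) and M(i′,j′) be non-isomorphic indecomposable representations of Q. Then M(i,j) ⊕ M(i′,j′) is almost rigid if and only if the segments γ(i−1, j) and γ(i′−1, j′) do not cross in P(Q). -/

import Mathlib

open scoped Classical

noncomputable section

namespace CambrianA

/-! ### Combinatorics of a type `A_{n+2}` quiver.

Vertices are `1, …, n+2`.  For `1 ≤ i ≤ n+1`, `ε i = true` means that the arrow between
`i` and `i+1` is oriented `i → i+1` (`i` is *upper-barred*), and `ε i = false` means it is
oriented `(i+1) → i` (`i` is *lower-barred*). -/

/-- `MaxIncr n ε i j` : the path `i → i+1 → ⋯ → j` is a maximal increasing path of `Q`. -/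
def MaxIncr (n : ℕ) (ε : ℕ → Bool) (i j : ℕ) : Prop :=
  1 ≤ i ∧ i ≤ j ∧ j ≤ n + 2 ∧ (∀ ℓ, i ≤ ℓ → ℓ < j → ε ℓ = true) ∧
    (i = 1 ∨ ε (i - 1) = false) ∧ (j = n + 2 ∨ ε j = false)

/-- `MaxDecr n ε i j` : the path `i → i-1 → ⋯ → j` is a maximal decreasing path of `Q`. -/
def MaxDecr (n : ℕ) (ε : ℕ → Bool) (i j : ℕ) : Prop :=
  1 ≤ j ∧ j ≤ i ∧ i ≤ n + 2 ∧ (∀ ℓ, j ≤ ℓ → ℓ < i → ε ℓ = false) ∧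
    (i = n + 2 ∨ ε i = true) ∧ (j = 1 ∨ ε (j - 1) = true)

/-- Vertices of the polygon lying on the lower boundary: `0`, `n+2` and lower-barred ones. -/
def LowerVertex (n : ℕ) (ε : ℕ → Bool) (x : ℕ) : Prop :=
  x = 0 ∨ x = n + 2 ∨ (1 ≤ x ∧ x ≤ n + 1 ∧ ε x = false)

/-- Vertices of the polygon lying on the upper boundary: `0`, `n+2` and upper-barred ones. -/
def UpperVertex (n : ℕ) (ε : ℕ → Bool) (x : ℕ) : Prop :=
  x = 0 ∨ x = n + 2 ∨ (1 ≤ x ∧ x ≤ n + 1 ∧ ε x = true)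

/-- `(a,b)` is a lower boundary edge: `a < b` are consecutive lower vertices. -/
def LowerEdge (n : ℕ) (ε : ℕ → Bool) (a b : ℕ) : Prop :=
  LowerVertex n ε a ∧ LowerVertex n ε b ∧ a < b ∧
    ∀ c, LowerVertex n ε c → ¬(a < c ∧ c < b)

/-- `(a,b)` is an upper boundary edge: `a < b` are consecutive upper vertices. -/
def UpperEdge (n : ℕ) (ε : ℕ → Bool) (a b : ℕ) : Prop :=
  UpperVertex n ε a ∧ UpperVertex n ε b ∧ a < b ∧
    ∀ c, UpperVertex n ε c → ¬(a < c ∧ c < b)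

def BoundaryEdge (n : ℕ) (ε : ℕ → Bool) (a b : ℕ) : Prop :=
  LowerEdge n ε a b ∨ UpperEdge n ε a b

/-- `IsHook n ε a lo hi` : the hook of the arrow of `Q` between `a` and `a+1` is the
maximal path supported on the interval `[lo, hi]`.
If `ε a = true` (arrow `a → a+1`, source `a`), the hook is the maximal decreasing path
starting at `a`; if `ε a = false` (arrow `a+1 → a`, source `a+1`), the hook is the
maximal increasing path starting at `a+1`. -/
def IsHook (n : ℕ) (ε : ℕ → Bool) (a lo hi : ℕ) : Prop :=
  if ε a = true then
    hi = a ∧ 1 ≤ lo ∧ lo ≤ a ∧ (∀ ℓ, lo ≤ ℓ → ℓ < a → ε ℓ = false) ∧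
      (lo = 1 ∨ ε (lo - 1) = true)
  else
    lo = a + 1 ∧ a + 1 ≤ hi ∧ hi ≤ n + 2 ∧ (∀ ℓ, a + 1 ≤ ℓ → ℓ < hi → ε ℓ = true) ∧
      (hi = n + 2 ∨ ε hi = false)

/-- `IsCohook n ε a lo hi` : the cohook of the arrow of `Q` between `a` and `a+1` is the
maximal path supported on the interval `[lo, hi]`, ending at the target of the arrow. -/
def IsCohook (n : ℕ) (ε : ℕ → Bool) (a lo hi : ℕ) : Prop :=
  if ε a = true then
    lo = a + 1 ∧ a + 1 ≤ hi ∧ hi ≤ n + 2 ∧ (∀ ℓ, a + 1 ≤ ℓ → ℓ < hi → ε ℓ = false) ∧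
      (hi = n + 2 ∨ ε hi = true)
  else
    hi = a ∧ 1 ≤ lo ∧ lo ≤ a ∧ (∀ ℓ, lo ≤ ℓ → ℓ < a → ε ℓ = true) ∧
      (lo = 1 ∨ ε (lo - 1) = false)

/-- Counterclockwise neighbor `R⁻¹(ℓ)` of the vertex `ℓ` of the polygon `P(Q)`, for the
cyclic order `0`, lower-barred vertices increasing, `n+2`, upper-barred vertices
decreasing. -/
def Rinv (n : ℕ) (ε : ℕ → Bool) (ℓ : ℕ) : ℕ :=
  if ℓ = n + 2 then sSup ({0} ∪ {x | 1 ≤ x ∧ x ≤ n + 1 ∧ ε x = true})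
  else if 1 ≤ ℓ ∧ ℓ ≤ n + 1 ∧ ε ℓ = true then
    sSup ({0} ∪ {x | 1 ≤ x ∧ x < ℓ ∧ ε x = true})
  else
    sInf ({n + 2} ∪ {x | ℓ < x ∧ x ≤ n + 1 ∧ ε x = false})

/-- `γ(i′,j′)` is a pivot of `γ(i,j)`. -/
def IsPivot (n : ℕ) (ε : ℕ → Bool) (i j i' j' : ℕ) : Prop :=
  (i' = Rinv n ε i ∧ j' = j ∧ Rinv n ε i < j) ∨
    (i' = i ∧ j' = Rinv n ε j ∧ i < Rinv n ε j)

/-! ### Geometry of the polygon `P(Q)`.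

The plane is identified with `ℂ`; `p x` is the vertex of the polygon labeled `x`,
for `0 ≤ x ≤ n+2`. -/

/-- The hypotheses on the points `p 0, …, p (n+2)` realizing the polygon `P(Q)`:
strictly increasing `x`-coordinates; `p 0` and `p (n+2)` on a common horizontal line `L`;
upper-barred vertices above `L`, lower-barred vertices below `L`; convex position. -/
def PolyPts (n : ℕ) (ε : ℕ → Bool) (p : ℕ → ℂ) : Prop :=
  (∀ a b, a < b → b ≤ n + 2 → (p a).re < (p b).re) ∧
    (p (n + 2)).im = (p 0).im ∧
    (∀ i, 1 ≤ i → i ≤ n + 1 →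
      (ε i = true → (p 0).im < (p i).im) ∧ (ε i = false → (p i).im < (p 0).im)) ∧
    ∀ i, i ≤ n + 2 → p i ∉ convexHull ℝ (p '' {j | j ≤ n + 2 ∧ j ≠ i})

/-- The line segment `γ(e.1, e.2)` of the polygon. -/
def Seg (p : ℕ → ℂ) (e : ℕ × ℕ) : Set ℂ := segment ℝ (p e.1) (p e.2)

/-- Two segments cross when they intersect in a point that is not a common endpoint. -/
def Cross (p : ℕ → ℂ) (e f : ℕ × ℕ) : Prop :=
  ∃ z, z ∈ Seg p e ∧ z ∈ Seg p f ∧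
    ¬((z = p e.1 ∨ z = p e.2) ∧ (z = p f.1 ∨ z = p f.2))

/-- Slope of the segment `γ(e.1, e.2)`. -/
def slope (p : ℕ → ℂ) (e : ℕ × ℕ) : ℝ :=
  ((p e.2).im - (p e.1).im) / ((p e.2).re - (p e.1).re)

def ValidPair (n : ℕ) (e : ℕ × ℕ) : Prop := e.1 < e.2 ∧ e.2 ≤ n + 2

/-- A triangulation of `P(Q)`: a maximal collection of pairwise noncrossing segments. -/
def IsTriangulation (n : ℕ) (p : ℕ → ℂ) (T : Finset (ℕ × ℕ)) : Prop :=
  (∀ e ∈ T, ValidPair n e) ∧ (∀ e ∈ T, ∀ f ∈ T, e ≠ f → ¬Cross p e f) ∧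
    ∀ e, ValidPair n e → e ∉ T → ∃ f ∈ T, Cross p e f

/-- Cross product of two planar vectors; positive iff `(u, v)` is counterclockwise. -/
def cross2 (u v : ℂ) : ℝ := u.re * v.im - u.im * v.re

/-- Arrows of the adjacency quiver `Q(T)` of a triangulation `T`: `e → f` whenever
`e` and `f` are sides of a common triangle of `T` and `f` follows `e` going
counterclockwise around that triangle. -/
def TriArrow (p : ℕ → ℂ) (T : Finset (ℕ × ℕ)) (e f : ℕ × ℕ) : Prop :=
  ∃ a b c : ℕ, a < b ∧ b < c ∧ (a, b) ∈ T ∧ (b, c) ∈ T ∧ (a, c) ∈ T ∧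
    ((0 < cross2 (p b - p a) (p c - p a) ∧
        ((e = (a, b) ∧ f = (b, c)) ∨ (e = (b, c) ∧ f = (a, c)) ∨
          (e = (a, c) ∧ f = (a, b)))) ∨
      (cross2 (p b - p a) (p c - p a) < 0 ∧
        ((e = (a, c) ∧ f = (b, c)) ∨ (e = (b, c) ∧ f = (a, b)) ∨
          (e = (a, b) ∧ f = (a, c)))))

/-! ### Representations of `Q` -/

/-- A finite dimensional representation of the quiver `Q` of type `A_{n+2}` over `k`.
The vector spaces are indexed by `ℕ`, and are required to vanish outside the set
`{1, …, n+2}` of vertices of `Q`.  For each `i`, `fwd i : V i → V (i+1)` is the structure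
map of the arrow `i → i+1` (it is required to vanish when the arrow is oriented in the
other direction, i.e. `ε i = false`) and `bwd i : V (i+1) → V i` is the structure map of
the arrow `i+1 → i` (required to vanish when `ε i = true`). -/
structure ARep (k : Type) [Field k] (n : ℕ) (ε : ℕ → Bool) where
  V : ℕ → Type
  [acg : ∀ x, AddCommGroup (V x)]
  [mod : ∀ x, Module k (V x)]
  [fdim : ∀ x, FiniteDimensional k (V x)]
  triv : ∀ x, x = 0 ∨ n + 2 < x → ∀ v : V x, v = 0
  fwd : ∀ i, V i →ₗ[k] V (i + 1)
  bwd : ∀ i, V (i + 1) →ₗ[k] V i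
  fwd_zero : ∀ i, ε i = false → fwd i = 0
  bwd_zero : ∀ i, ε i = true → bwd i = 0

attribute [instance] ARep.acg ARep.mod ARep.fdim

variable {k : Type} [Field k] {n : ℕ} {ε : ℕ → Bool}

/-- Morphisms of representations. -/
@[ext]
structure ARep.Hom (M N : ARep k n ε) where
  app : ∀ x, M.V x →ₗ[k] N.V x
  comm_fwd : ∀ i (v : M.V i), app (i + 1) (M.fwd i v) = N.fwd i (app i v)
  comm_bwd : ∀ i (v : M.V (i + 1)), app i (M.bwd i v) = N.bwd i (app (i + 1) v)

/-- The identity morphism. -/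
def ARep.Hom.id (M : ARep k n ε) : M.Hom M :=
  ⟨fun _ => LinearMap.id, fun _ _ => rfl, fun _ _ => rfl⟩

/-- Composition of morphisms. -/
def ARep.Hom.comp {M N P : ARep k n ε} (g : N.Hom P) (f : M.Hom N) : M.Hom P where
  app x := (g.app x).comp (f.app x)
  comm_fwd i v := by simp only [LinearMap.comp_apply, f.comm_fwd, g.comm_fwd]
  comm_bwd i v := by simp only [LinearMap.comp_apply, f.comm_bwd, g.comm_bwd]

/-- Sum of two morphisms. -/
def ARep.Hom.add {M N : ARep k n ε} (f g : M.Hom N) : M.Hom N where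
  app x := f.app x + g.app x
  comm_fwd i v := by
    simp only [LinearMap.add_apply, f.comm_fwd, g.comm_fwd, map_add]
  comm_bwd i v := by
    simp only [LinearMap.add_apply, f.comm_bwd, g.comm_bwd, map_add]

/-- Scalar multiple of a morphism. -/
def ARep.Hom.smul {M N : ARep k n ε} (c : k) (f : M.Hom N) : M.Hom N where
  app x := c • f.app x
  comm_fwd i v := by simp only [LinearMap.smul_apply, f.comm_fwd, map_smul]
  comm_bwd i v := by simp only [LinearMap.smul_apply, f.comm_bwd, map_smul]

/-- Isomorphism of representations. -/
def ARep.Iso (M N : ARep k n ε) : Prop :=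
  ∃ f : M.Hom N, ∀ x, Function.Bijective (f.app x)

/-- The zero representation(s). -/
def ARep.IsZero (M : ARep k n ε) : Prop := ∀ x, ∀ v : M.V x, v = 0

/-- The support of a representation. -/
def ARep.supp (M : ARep k n ε) : Set ℕ := {x | ∃ v : M.V x, v ≠ 0}

/-- Direct sum of two representations. -/
def ARep.dsum (M N : ARep k n ε) : ARep k n ε where
  V x := M.V x × N.V x
  acg _ := by infer_instance
  mod _ := by infer_instance
  fdim _ := by infer_instance
  triv x hx v := by
    have h1 := M.triv x hx v.1
    have h2 := N.triv x hx v.2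
    exact Prod.ext h1 h2
  fwd i := (M.fwd i).prodMap (N.fwd i)
  bwd i := (M.bwd i).prodMap (N.bwd i)
  fwd_zero i h := by
    show (M.fwd i).prodMap (N.fwd i) = 0
    rw [M.fwd_zero i h, N.fwd_zero i h]
    apply LinearMap.ext; rintro ⟨a, b⟩; simp
  bwd_zero i h := by
    show (M.bwd i).prodMap (N.bwd i) = 0
    rw [M.bwd_zero i h, N.bwd_zero i h]
    apply LinearMap.ext; rintro ⟨a, b⟩; simp

/-- One dimensional space `k` if `P` holds, `0` otherwise (as a submodule of `k`). -/
def fiber (k : Type) [Field k] (P : Prop) : Submodule k k := if P then ⊤ else ⊥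

/-- The canonical map `fiber k P → fiber k Q` : "identity" if `P ∧ Q`, zero otherwise. -/
def fiberMap (k : Type) [Field k] (P Q : Prop) : fiber k P →ₗ[k] fiber k Q :=
  if h : P ∧ Q then
    { toFun := fun v => ⟨(v : k), by rw [fiber, if_pos h.2]; exact Submodule.mem_top⟩
      map_add' := fun _ _ => rfl
      map_smul' := fun _ _ => rfl }
  else 0

/-- The zero representation. -/
def zeroRep (k : Type) [Field k] (n : ℕ) (ε : ℕ → Bool) : ARep k n ε where
  V _ := ↥(fiber k False)
  acg _ := by infer_instance
  mod _ := by infer_instance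
  fdim _ := by infer_instance
  triv x _ v := by
    have hfib : fiber k False = ⊥ := if_neg (fun h : False => h.elim)
    obtain ⟨w, hw⟩ := v
    apply Subtype.ext
    have hb : w ∈ (⊥ : Submodule k k) := hfib ▸ hw
    exact (Submodule.mem_bot k).1 hb
  fwd _ := 0
  bwd _ := 0
  fwd_zero _ _ := rfl
  bwd_zero _ _ := rfl

/-- The condition for a vertex `x` to be in the support of the interval representation
`M(i,j)`. -/
def SuppCond (n i j x : ℕ) : Prop := i ≤ x ∧ x ≤ j ∧ 1 ≤ x ∧ x ≤ n + 2

/-- The interval (string) representation `M(i,j)` of `Q`: one dimensional at each vertex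
`x` with `i ≤ x ≤ j`, zero elsewhere, with identity maps on all arrows whose endpoints
both lie in `[i,j]`. -/
def intervalRep (k : Type) [Field k] (n : ℕ) (ε : ℕ → Bool) (i j : ℕ) : ARep k n ε where
  V x := ↥(fiber k (SuppCond n i j x))
  acg _ := by infer_instance
  mod _ := by infer_instance
  fdim _ := by infer_instance
  triv x hx v := by
    have hP : ¬SuppCond n i j x := by simp only [SuppCond]; omega
    have hfib : fiber k (SuppCond n i j x) = ⊥ := if_neg hP
    obtain ⟨w, hw⟩ := v
    apply Subtype.ext
    have hb : w ∈ (⊥ : Submodule k k) := hfib ▸ hw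
    exact (Submodule.mem_bot k).1 hb
  fwd ℓ :=
    if ε ℓ = true then fiberMap k (SuppCond n i j ℓ) (SuppCond n i j (ℓ + 1)) else 0
  bwd ℓ :=
    if ε ℓ = true then 0 else fiberMap k (SuppCond n i j (ℓ + 1)) (SuppCond n i j ℓ)
  fwd_zero ℓ h := by simp [h]
  bwd_zero ℓ h := by simp [h]

/-- Direct sum of a list of representations. -/
def dsumList (k : Type) [Field k] (n : ℕ) (ε : ℕ → Bool) :
    List (ARep k n ε) → ARep k n ε
  | [] => zeroRep k n ε
  | M :: L => M.dsum (dsumList k n ε L)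

/-- Indecomposable representations. -/
def ARep.Indec (M : ARep k n ε) : Prop :=
  ¬M.IsZero ∧ ∀ A B : ARep k n ε, M.Iso (A.dsum B) → A.IsZero ∨ B.IsZero

/-- `A` is a direct summand of `T`. -/
def ARep.IsSummand (A T : ARep k n ε) : Prop := ∃ B : ARep k n ε, T.Iso (A.dsum B)

/-- A representation is basic when it has no repeated indecomposable direct summand. -/
def ARep.Basic (T : ARep k n ε) : Prop :=
  ∀ A : ARep k n ε, A.Indec → ¬(A.dsum A).IsSummand T

/-- A short exact sequence `0 → B → E → A → 0`. -/
structure SES (B A : ARep k n ε) where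
  E : ARep k n ε
  ι : B.Hom E
  π : E.Hom A
  inj : ∀ x, Function.Injective (ι.app x)
  surj : ∀ x, Function.Surjective (π.app x)
  exct : ∀ x (v : E.V x), π.app x v = 0 ↔ ∃ u, ι.app x u = v

/-- A short exact sequence splits. -/
def SES.Splits {B A : ARep k n ε} (σ : SES B A) : Prop :=
  ∃ r : σ.E.Hom B, ∀ x (v : B.V x), r.app x (σ.ι.app x v) = v

/-- `Ext¹(A, B) = 0` : every short exact sequence `0 → B → E → A → 0` splits. -/
def ExtZero (A B : ARep k n ε) : Prop := ∀ σ : SES B A, σ.Splits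

/-- `Ext¹(A,B) ≅ k`, generated by (the class of) a short exact sequence
`0 → B → E → A → 0` with indecomposable middle term `E`: there is a non-split such
sequence `σ` with `σ.E` indecomposable such that every non-split sequence is equivalent
to a nonzero scalar multiple of `σ`. -/
def ExtOneDimIndecMid (A B : ARep k n ε) : Prop :=
  ∃ σ : SES B A, ¬σ.Splits ∧ σ.E.Indec ∧
    ∀ τ : SES B A, ¬τ.Splits → ∃ c : k, c ≠ 0 ∧
      ∃ φ : σ.E.Hom τ.E, (∀ x, Function.Bijective (φ.app x)) ∧
        (∀ x (v : B.V x), φ.app x (σ.ι.app x v) = τ.ι.app x v) ∧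
        (∀ x (v : σ.E.V x), τ.π.app x (φ.app x v) = c • σ.π.app x v)

/-- Almost rigid representations. -/
def AlmostRigid (T : ARep k n ε) : Prop :=
  T.Basic ∧ ∀ A B : ARep k n ε, A.Indec → B.Indec → A.IsSummand T → B.IsSummand T →
    ExtZero A B ∨ ExtOneDimIndecMid A B

/-- Maximal almost rigid representations. -/
def MaxAlmostRigid (T : ARep k n ε) : Prop :=
  AlmostRigid T ∧ ∀ M : ARep k n ε, ¬M.IsZero → ¬AlmostRigid (T.dsum M)

/-- `f` is a section. -/
def ARep.Hom.IsSection {M N : ARep k n ε} (f : M.Hom N) : Prop :=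
  ∃ g : N.Hom M, ∀ x (v : M.V x), g.app x (f.app x v) = v

/-- `f` is a retraction. -/
def ARep.Hom.IsRetraction {M N : ARep k n ε} (f : M.Hom N) : Prop :=
  ∃ g : N.Hom M, ∀ x (v : N.V x), f.app x (g.app x v) = v

/-- Irreducible morphisms: `f` is neither a section nor a retraction, and in every
factorization `f = g ∘ h` either `h` is a section or `g` is a retraction. -/
def ARep.Hom.Irred {M N : ARep k n ε} (f : M.Hom N) : Prop :=
  ¬f.IsSection ∧ ¬f.IsRetraction ∧
    ∀ (Z : ARep k n ε) (h : M.Hom Z) (g : Z.Hom N),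
      (∀ x (v : M.V x), f.app x v = g.app x (h.app x v)) → h.IsSection ∨ g.IsRetraction

/-- Subrepresentations : families of subspaces closed under the structure maps. -/
structure Subrep (M : ARep k n ε) where
  U : ∀ x, Submodule k (M.V x)
  fwd_mem : ∀ i, ∀ v ∈ U i, M.fwd i v ∈ U (i + 1)
  bwd_mem : ∀ i, ∀ v ∈ U (i + 1), M.bwd i v ∈ U i

/-- The central charge `Z(M) = Σ_{x=1}^{n+2} dim_k(M_x) · (p_x − p_{x−1})`. -/
def charge (p : ℕ → ℂ) (M : ARep k n ε) : ℂ :=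
  ∑ x ∈ Finset.Icc 1 (n + 2), (Module.finrank k (M.V x) : ℂ) * (p x - p (x - 1))

/-- The central charge of a subrepresentation. -/
def subCharge (p : ℕ → ℂ) {M : ARep k n ε} (L : Subrep M) : ℂ :=
  ∑ x ∈ Finset.Icc 1 (n + 2), (Module.finrank k (L.U x) : ℂ) * (p x - p (x - 1))

/-- The representation `F(T) = ⊕_{γ(a,b) ∈ T} M(a+1, b)` attached to a collection `T` of
segments of the polygon `P(Q)`. -/
def FRep (k : Type) [Field k] (n : ℕ) (ε : ℕ → Bool) (T : Finset (ℕ × ℕ)) : ARep k n ε :=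
  dsumList k n ε (T.toList.map fun e => intervalRep k n ε (e.1 + 1) e.2)

end CambrianA

namespace CambrianA

/-! ### Basic API for interval representations -/

section API

variable {k : Type} [Field k] {n : ℕ} {ε : ℕ → Bool}

/-- The inclusion of a fibre of an interval representation in `k`. -/
def val (k : Type) [Field k] (n : ℕ) (ε : ℕ → Bool) (i j x : ℕ) :
    (intervalRep k n ε i j).V x →ₗ[k] k :=
  (fiber k (SuppCond n i j x)).subtype

/-- The projection of `k` to a fibre of an interval representation. -/
def inn (k : Type) [Field k] (n : ℕ) (ε : ℕ → Bool) (i j x : ℕ) :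
    k →ₗ[k] (intervalRep k n ε i j).V x :=
  if h : SuppCond n i j x then
    { toFun := fun v => (⟨v, by rw [fiber, if_pos h]; exact Submodule.mem_top⟩ :
        fiber k (SuppCond n i j x))
      map_add' := fun _ _ => rfl
      map_smul' := fun _ _ => rfl }
  else 0

lemma val_inj {i j x : ℕ} {v w : (intervalRep k n ε i j).V x}
    (h : val k n ε i j x v = val k n ε i j x w) : v = w :=
  Subtype.ext h

lemma val_off {i j x : ℕ} (hx : ¬SuppCond n i j x) (v : (intervalRep k n ε i j).V x) :
    val k n ε i j x v = 0 := by
  have hfib : fiber k (SuppCond n i j x) = ⊥ := if_neg hx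
  obtain ⟨w, hw⟩ := v
  have hb : w ∈ (⊥ : Submodule k k) := hfib ▸ hw
  exact (Submodule.mem_bot k).1 hb

lemma eq_zero_off {i j x : ℕ} (hx : ¬SuppCond n i j x) (v : (intervalRep k n ε i j).V x) :
    v = 0 := val_inj (by rw [val_off hx, map_zero])

lemma val_inn (i j x : ℕ) (c : k) :
    val k n ε i j x (inn k n ε i j x c) = if SuppCond n i j x then c else 0 := by
  by_cases h : SuppCond n i j x
  · rw [if_pos h, inn, dif_pos h]; rfl
  · rw [if_neg h, val_off h]

lemma inn_val {i j x : ℕ} (v : (intervalRep k n ε i j).V x) :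
    inn k n ε i j x (val k n ε i j x v) = v := by
  apply val_inj
  rw [val_inn]
  split_ifs with h
  · rfl
  · rw [val_off h]

lemma val_fwd (i j l : ℕ) (v : (intervalRep k n ε i j).V l) :
    val k n ε i j (l + 1) ((intervalRep k n ε i j).fwd l v) =
      if ε l = true ∧ SuppCond n i j (l + 1) then val k n ε i j l v else 0 := by
  by_cases he : ε l = true
  · by_cases h : SuppCond n i j (l + 1)
    · rw [if_pos ⟨he, h⟩]
      by_cases h' : SuppCond n i j l
      · have : (intervalRep k n ε i j).fwd l =
            fiberMap k (SuppCond n i j l) (SuppCond n i j (l + 1)) := if_pos he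
        rw [this, fiberMap, dif_pos ⟨h', h⟩]; rfl
      · rw [eq_zero_off h' v]; simp
    · rw [if_neg (fun hh => h hh.2), val_off h]
  · have he' : ε l = false := by simpa using he
    rw [if_neg (fun hh => he hh.1), (intervalRep k n ε i j).fwd_zero l he']; simp

lemma val_bwd (i j l : ℕ) (v : (intervalRep k n ε i j).V (l + 1)) :
    val k n ε i j l ((intervalRep k n ε i j).bwd l v) =
      if ε l = false ∧ SuppCond n i j l then val k n ε i j (l + 1) v else 0 := by
  by_cases he : ε l = false
  · by_cases h : SuppCond n i j l
    · rw [if_pos ⟨he, h⟩]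
      by_cases h' : SuppCond n i j (l + 1)
      · have : (intervalRep k n ε i j).bwd l =
            fiberMap k (SuppCond n i j (l + 1)) (SuppCond n i j l) := if_neg (by simp [he])
        rw [this, fiberMap, dif_pos ⟨h', h⟩]; rfl
      · rw [eq_zero_off h' v]; simp
    · rw [if_neg (fun hh => h hh.2), val_off h]
  · have he' : ε l = true := by simpa using he
    rw [if_neg (fun hh => he hh.1), (intervalRep k n ε i j).bwd_zero l he']; simp

lemma supp_iff {i j : ℕ} (h1 : 1 ≤ i) (h3 : j ≤ n + 2) (x : ℕ) :
    SuppCond n i j x ↔ i ≤ x ∧ x ≤ j := by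
  unfold SuppCond; omega

/-- Every linear map between fibres is given by a scalar. -/
lemma lin_scalar {i j i' j' x y : ℕ}
    (f : (intervalRep k n ε i j).V x →ₗ[k] (intervalRep k n ε i' j').V y) :
    ∃ c : k, ∀ v, f v = inn k n ε i' j' y (c * val k n ε i j x v) := by
  refine ⟨val k n ε i' j' y (f (inn k n ε i j x 1)), fun v => ?_⟩
  have h : v = val k n ε i j x v • inn k n ε i j x (1 : k) := by
    rw [← map_smul, smul_eq_mul, mul_one, inn_val]
  conv_lhs => rw [h, map_smul, ← inn_val (f (inn k n ε i j x 1)), ← map_smul]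
  rw [smul_eq_mul, mul_comm]

/-- Homs off the diagonal are determined by compatible scalars. -/
lemma end_scalar {i j : ℕ} (h1 : 1 ≤ i) (h3 : j ≤ n + 2)
    (f : (intervalRep k n ε i j).Hom (intervalRep k n ε i j)) :
    ∃ c : k, ∀ x v, f.app x v = c • v := by
  choose c hc using fun x => lin_scalar (f.app x)
  have hc' : ∀ x v, f.app x v = c x • v := by
    intro x v
    rw [hc, ← smul_eq_mul, map_smul, inn_val]
  have step : ∀ x, i ≤ x → x + 1 ≤ j → c (x + 1) = c x := by
    intro x hx hx'
    have s1 : SuppCond n i j x := (supp_iff h1 h3 x).2 (by omega)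
    have s2 : SuppCond n i j (x + 1) := (supp_iff h1 h3 _).2 (by omega)
    cases he : ε x with
    | true =>
      have := congrArg (val k n ε i j (x + 1)) (f.comm_fwd x (inn k n ε i j x 1))
      rw [hc', hc', map_smul, map_smul, map_smul, val_fwd, val_inn] at this
      simpa [he, s1, s2] using this
    | false =>
      have := congrArg (val k n ε i j x) (f.comm_bwd x (inn k n ε i j (x + 1) 1))
      rw [hc', hc', map_smul, map_smul, map_smul, val_bwd, val_inn] at this
      simpa [he, s1, s2, eq_comm] using this
  have all : ∀ d, i + d ≤ j → c (i + d) = c i := by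
    intro d
    induction d with
    | zero => intro _; rfl
    | succ d ih => intro h; rw [← add_assoc, step _ (by omega) (by omega), ih (by omega)]
  refine ⟨c i, fun x v => ?_⟩
  by_cases hx : SuppCond n i j x
  · have := (supp_iff h1 h3 x).1 hx
    obtain ⟨d, rfl⟩ := Nat.exists_eq_add_of_le this.1
    rw [hc', all d this.2]
  · rw [eq_zero_off hx v]; simp

/-- The composite of two maps between different interval representations vanishes. -/
lemma comp_zero {i j i' j' : ℕ} (h1 : 1 ≤ i) (h2 : i ≤ j) (h3 : j ≤ n + 2)
    (h4 : 1 ≤ i') (h5 : i' ≤ j') (h6 : j' ≤ n + 2) (hne : (i, j) ≠ (i', j'))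
    (f : (intervalRep k n ε i j).Hom (intervalRep k n ε i' j'))
    (g : (intervalRep k n ε i' j').Hom (intervalRep k n ε i j)) :
    ∀ x v, g.app x (f.app x v) = 0 := by
  obtain ⟨c, hc⟩ := end_scalar h1 h3 (g.comp f)
  obtain ⟨d, hd⟩ := end_scalar h4 h6 (f.comp g)
  have hc : ∀ x v, g.app x (f.app x v) = c • v := hc
  have hd : ∀ x v, f.app x (g.app x v) = d • v := hd
  have e1 : ∀ x v, d • f.app x v = c • f.app x v := by
    intro x v
    rw [← hd, hc, map_smul]
  have key : c = 0 := by
    by_contra hc0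
    -- supports agree
    have s1 : ∀ x, SuppCond n i j x → SuppCond n i' j' x := by
      intro x hx
      by_contra hx'
      have := congrArg (val k n ε i j x) (hc x (inn k n ε i j x 1))
      rw [eq_zero_off hx' (f.app x _), map_zero, map_zero, map_smul, val_inn, if_pos hx] at this
      simp at this
      exact hc0 this.symm
    have hi : SuppCond n i j i := (supp_iff h1 h3 i).2 ⟨le_rfl, h2⟩
    have hd0 : d ≠ 0 := by
      rintro rfl
      have h := e1 i (inn k n ε i j i 1)
      rw [zero_smul] at h
      have h0 : f.app i (inn k n ε i j i 1) = 0 := by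
        rcases smul_eq_zero.1 h.symm with h | h
        · exact absurd h hc0
        · exact h
      have := congrArg (val k n ε i j i) (hc i (inn k n ε i j i 1))
      rw [h0, map_zero, map_zero, map_smul, val_inn, if_pos hi] at this
      simp at this
      exact hc0 this.symm
    have s2 : ∀ x, SuppCond n i' j' x → SuppCond n i j x := by
      intro x hx
      by_contra hx'
      have := congrArg (val k n ε i' j' x) (hd x (inn k n ε i' j' x 1))
      rw [eq_zero_off hx' (g.app x _), map_zero, map_zero, map_smul, val_inn, if_pos hx] at this
      simp at this
      exact hd0 this.symm
    have t1 := (supp_iff h4 h6 _).1 (s1 i hi)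
    have t2 := (supp_iff h4 h6 _).1 (s1 j ((supp_iff h1 h3 j).2 ⟨h2, le_rfl⟩))
    have t3 := (supp_iff h1 h3 _).1 (s2 i' ((supp_iff h4 h6 _).2 ⟨le_rfl, h5⟩))
    have t4 := (supp_iff h1 h3 _).1 (s2 j' ((supp_iff h4 h6 _).2 ⟨h5, le_rfl⟩))
    exact hne (Prod.ext (by simp; omega) (by simp; omega))
  intro x v
  rw [hc, key, zero_smul]

lemma interval_not_zero {i j : ℕ} (h1 : 1 ≤ i) (h2 : i ≤ j) (h3 : j ≤ n + 2) :
    ¬(intervalRep k n ε i j).IsZero := by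
  intro h
  have := congrArg (val k n ε i j i) (h i (inn k n ε i j i 1))
  rw [val_inn, if_pos ((supp_iff h1 h3 i).2 ⟨le_rfl, h2⟩), map_zero] at this
  exact one_ne_zero this

end API

/-! ### Generalities on morphisms, summands, extensions -/

section General

variable {k : Type} [Field k] {n : ℕ} {ε : ℕ → Bool}

/-- The inverse of a bijective morphism. -/
lemma exists_inv {M N : ARep k n ε} (f : M.Hom N) (hf : ∀ x, Function.Bijective (f.app x)) :
    ∃ g : N.Hom M, (∀ x v, g.app x (f.app x v) = v) ∧ (∀ x v, f.app x (g.app x v) = v) := by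
  let e : ∀ x, M.V x ≃ₗ[k] N.V x := fun x => LinearEquiv.ofBijective (f.app x) (hf x)
  have e1 : ∀ x v, (e x).symm (f.app x v) = v := fun x v => (e x).symm_apply_apply v
  have e2 : ∀ x v, f.app x ((e x).symm v) = v := fun x v => (e x).apply_symm_apply v
  refine ⟨⟨fun x => (e x).symm.toLinearMap, ?_, ?_⟩, e1, e2⟩
  · intro i v
    apply (hf (i + 1)).1
    rw [f.comm_fwd]
    simp only [LinearEquiv.coe_coe]
    rw [e2, e2]
  · intro i v
    apply (hf i).1
    rw [f.comm_bwd]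
    simp only [LinearEquiv.coe_coe]
    rw [e2, e2]

lemma bij_of_inv {M N : ARep k n ε} (f : M.Hom N) (g : N.Hom M)
    (h1 : ∀ x v, g.app x (f.app x v) = v) (h2 : ∀ x v, f.app x (g.app x v) = v) :
    ∀ x, Function.Bijective (f.app x) := fun x =>
  Function.bijective_iff_has_inverse.2 ⟨g.app x, h1 x, h2 x⟩

/-- First inclusion. -/
def inl (M N : ARep k n ε) : M.Hom (M.dsum N) where
  app x := LinearMap.inl k (M.V x) (N.V x)
  comm_fwd i v := by
    change (M.fwd i v, (0 : N.V (i + 1))) = (M.fwd i v, N.fwd i 0); rw [map_zero]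
  comm_bwd i v := by
    change (M.bwd i v, (0 : N.V i)) = (M.bwd i v, N.bwd i 0); rw [map_zero]

/-- Second inclusion. -/
def inr (M N : ARep k n ε) : N.Hom (M.dsum N) where
  app x := LinearMap.inr k (M.V x) (N.V x)
  comm_fwd i v := by
    change ((0 : M.V (i + 1)), N.fwd i v) = (M.fwd i 0, N.fwd i v); rw [map_zero]
  comm_bwd i v := by
    change ((0 : M.V i), N.bwd i v) = (M.bwd i 0, N.bwd i v); rw [map_zero]

/-- First projection. -/
def fst (M N : ARep k n ε) : (M.dsum N).Hom M where
  app x := LinearMap.fst k (M.V x) (N.V x)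
  comm_fwd _ _ := rfl
  comm_bwd _ _ := rfl

/-- Second projection. -/
def snd (M N : ARep k n ε) : (M.dsum N).Hom N where
  app x := LinearMap.snd k (M.V x) (N.V x)
  comm_fwd _ _ := rfl
  comm_bwd _ _ := rfl

/-- Map into a direct sum. -/
def pair {L M N : ARep k n ε} (f : L.Hom M) (g : L.Hom N) : L.Hom (M.dsum N) where
  app x := (f.app x).prod (g.app x)
  comm_fwd i v := Prod.ext (f.comm_fwd i v) (g.comm_fwd i v)
  comm_bwd i v := Prod.ext (f.comm_bwd i v) (g.comm_bwd i v)

/-- Map out of a direct sum. -/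
def copair {L M N : ARep k n ε} (f : M.Hom L) (g : N.Hom L) : (M.dsum N).Hom L where
  app x := (f.app x).coprod (g.app x)
  comm_fwd i v := by
    change f.app (i + 1) (M.fwd i v.1) + g.app (i + 1) (N.fwd i v.2) =
      L.fwd i (f.app i v.1 + g.app i v.2)
    rw [f.comm_fwd, g.comm_fwd, map_add]
  comm_bwd i v := by
    change f.app i (M.bwd i v.1) + g.app i (N.bwd i v.2) =
      L.bwd i (f.app (i + 1) v.1 + g.app (i + 1) v.2)
    rw [f.comm_bwd, g.comm_bwd, map_add]

/-- The kernel of a morphism. -/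
def kerRep {M N : ARep k n ε} (f : M.Hom N) : ARep k n ε where
  V x := LinearMap.ker (f.app x)
  acg _ := by infer_instance
  mod _ := by infer_instance
  fdim _ := by infer_instance
  triv x hx v := Subtype.ext (M.triv x hx v.1)
  fwd i := (M.fwd i).restrict (p := LinearMap.ker (f.app i))
    (q := LinearMap.ker (f.app (i + 1))) (fun v hv => by
    rw [LinearMap.mem_ker] at hv ⊢; rw [f.comm_fwd, hv, map_zero])
  bwd i := (M.bwd i).restrict (p := LinearMap.ker (f.app (i + 1)))
    (q := LinearMap.ker (f.app i)) (fun v hv => by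
    rw [LinearMap.mem_ker] at hv ⊢; rw [f.comm_bwd, hv, map_zero])
  fwd_zero i h := by
    apply LinearMap.ext; intro v; apply Subtype.ext
    change M.fwd i v.1 = 0
    rw [M.fwd_zero i h]; rfl
  bwd_zero i h := by
    apply LinearMap.ext; intro v; apply Subtype.ext
    change M.bwd i v.1 = 0
    rw [M.bwd_zero i h]; rfl

/-- Inclusion of the kernel. -/
def kerIncl {M N : ARep k n ε} (f : M.Hom N) : (kerRep f).Hom M where
  app x := (LinearMap.ker (f.app x)).subtype
  comm_fwd _ _ := rfl
  comm_bwd _ _ := rfl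

lemma kerIncl_inj {M N : ARep k n ε} (f : M.Hom N) {x : ℕ} {v w : (kerRep f).V x}
    (h : (kerIncl f).app x v = (kerIncl f).app x w) : v = w := Subtype.ext h

lemma ker_exists {M N : ARep k n ε} (f : M.Hom N) {x : ℕ} (v : M.V x) (h : f.app x v = 0) :
    ∃ w, (kerIncl f).app x w = v := ⟨⟨v, h⟩, rfl⟩

lemma kerIncl_zero {M N : ARep k n ε} (f : M.Hom N) {x : ℕ} (w : (kerRep f).V x) :
    f.app x ((kerIncl f).app x w) = 0 := w.2

lemma ker_lift {L M N : ARep k n ε} (f : M.Hom N) (u : L.Hom M)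
    (h : ∀ x v, f.app x (u.app x v) = 0) :
    ∃ g : L.Hom (kerRep f), ∀ x v, (kerIncl f).app x (g.app x v) = u.app x v := by
  refine ⟨⟨fun x => LinearMap.codRestrict (LinearMap.ker (f.app x)) (u.app x) (h x), ?_, ?_⟩, ?_⟩
  · intro i v; exact Subtype.ext (u.comm_fwd i v)
  · intro i v; exact Subtype.ext (u.comm_bwd i v)
  · intro x v; rfl

lemma fst_inl {M N : ARep k n ε} {x : ℕ} (v : M.V x) :
    (fst M N).app x ((inl M N).app x v) = v := rfl
lemma snd_inl {M N : ARep k n ε} {x : ℕ} (v : M.V x) :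
    (snd M N).app x ((inl M N).app x v) = 0 := rfl
lemma fst_inr {M N : ARep k n ε} {x : ℕ} (v : N.V x) :
    (fst M N).app x ((inr M N).app x v) = 0 := rfl
lemma snd_inr {M N : ARep k n ε} {x : ℕ} (v : N.V x) :
    (snd M N).app x ((inr M N).app x v) = v := rfl
lemma inl_add_inr {M N : ARep k n ε} {x : ℕ} (w : (M.dsum N).V x) :
    (inl M N).app x ((fst M N).app x w) + (inr M N).app x ((snd M N).app x w) = w :=
  Prod.ext (add_zero _) (zero_add _)
lemma dsum_ext {M N : ARep k n ε} {x : ℕ} {v w : (M.dsum N).V x}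
    (h1 : (fst M N).app x v = (fst M N).app x w) (h2 : (snd M N).app x v = (snd M N).app x w) :
    v = w := Prod.ext h1 h2
lemma fst_pair {L M N : ARep k n ε} (f : L.Hom M) (g : L.Hom N) {x : ℕ} (v : L.V x) :
    (fst M N).app x ((pair f g).app x v) = f.app x v := rfl
lemma snd_pair {L M N : ARep k n ε} (f : L.Hom M) (g : L.Hom N) {x : ℕ} (v : L.V x) :
    (snd M N).app x ((pair f g).app x v) = g.app x v := rfl
lemma copair_app {L M N : ARep k n ε} (f : M.Hom L) (g : N.Hom L) {x : ℕ} (v : (M.dsum N).V x) :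
    (copair f g).app x v = f.app x ((fst M N).app x v) + g.app x ((snd M N).app x v) := rfl
lemma comp_app {L M N : ARep k n ε} (g : M.Hom N) (f : L.Hom M) {x : ℕ} (v : L.V x) :
    (g.comp f).app x v = g.app x (f.app x v) := rfl
lemma add_app {M N : ARep k n ε} (f g : M.Hom N) {x : ℕ} (v : M.V x) :
    (f.add g).app x v = f.app x v + g.app x v := rfl
lemma smul_app {M N : ARep k n ε} (c : k) (f : M.Hom N) {x : ℕ} (v : M.V x) :
    (f.smul c).app x v = c • f.app x v := rfl
lemma id_app {M : ARep k n ε} {x : ℕ} (v : M.V x) :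
    (ARep.Hom.id M).app x v = v := rfl

lemma inj_iff {M N : ARep k n ε} (f : M.Hom N) (x : ℕ) :
    Function.Injective (f.app x) ↔ ∀ v, f.app x v = 0 → v = 0 :=
  injective_iff_map_eq_zero (f.app x)

/-- If `a ∘ b` is a nonzero scalar and `A` is indecomposable then `a` is an isomorphism. -/
lemma bij_of_scalar {A M : ARep k n ε} (hA : A.Indec) (hM : ¬M.IsZero)
    (a : A.Hom M) (b : M.Hom A) (c : k) (hc : c ≠ 0) (hab : ∀ x v, a.app x (b.app x v) = c • v) :
    ∀ x, Function.Bijective (a.app x) := by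
  have hs : ∀ x, Function.Surjective (a.app x) := fun x v =>
    ⟨c⁻¹ • b.app x v, by rw [map_smul, hab, smul_smul, inv_mul_cancel₀ hc, one_smul]⟩
  let u : A.Hom A := (ARep.Hom.id A).add ((b.comp a).smul (-c⁻¹))
  have hu : ∀ x v, u.app x v = v + -c⁻¹ • b.app x (a.app x v) := fun _ _ => rfl
  obtain ⟨q, hq⟩ := ker_lift a u (by
    intro x v
    rw [hu, map_add, map_smul, hab, smul_smul, neg_mul, inv_mul_cancel₀ hc, neg_smul, one_smul,
      add_neg_cancel])
  have hF : ∀ x, Function.Bijective ((pair a q).app x) := by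
    intro x
    constructor
    · rw [inj_iff]
      intro v hv
      have h1 : a.app x v = 0 := by rw [← fst_pair a q v, hv, map_zero]
      have h2 : q.app x v = 0 := by rw [← snd_pair a q v, hv, map_zero]
      have h3 := hq x v
      rw [h2, map_zero, hu, h1, map_zero, smul_zero, add_zero] at h3
      exact h3.symm
    · intro w
      set m := (fst _ _).app x w with hm
      set z := (snd _ _).app x w with hz
      have h0 := kerIncl_zero a z
      have h1 : a.app x ((kerIncl a).app x z + c⁻¹ • b.app x m) = m := by
        rw [map_add, map_smul, hab, smul_smul, inv_mul_cancel₀ hc, one_smul, h0, zero_add]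
      refine ⟨(kerIncl a).app x z + c⁻¹ • b.app x m, dsum_ext ?_ (kerIncl_inj a ?_)⟩
      · rw [fst_pair, h1]
      · rw [snd_pair, hq, hu, h1, neg_smul, add_neg_cancel_right]
  rcases hA.2 M (kerRep a) ⟨pair a q, hF⟩ with h | h
  · exact absurd h hM
  · intro x
    refine ⟨?_, hs x⟩
    rw [inj_iff]
    intro v hv
    obtain ⟨w, rfl⟩ := ker_exists a v hv
    rw [h x w, map_zero]

lemma interval_indec {i j : ℕ} (h1 : 1 ≤ i) (h2 : i ≤ j) (h3 : j ≤ n + 2) :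
    (intervalRep k n ε i j).Indec := by
  refine ⟨interval_not_zero h1 h2 h3, fun A B ⟨f, hf⟩ => ?_⟩
  obtain ⟨g, hgf, hfg⟩ := exists_inv f hf
  by_contra hcon
  push Not at hcon
  obtain ⟨hA, hB⟩ := hcon
  obtain ⟨c, hc⟩ := end_scalar h1 h3 ((g.comp (inl A B)).comp ((fst A B).comp f))
  simp only [comp_app] at hc
  have hc' : ∀ x w, (inl A B).app x ((fst A B).app x w) = c • w := by
    intro x w
    have := congrArg (f.app x) (hc x (g.app x w))
    rw [hfg, hfg, map_smul, hfg] at this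
    exact this
  unfold ARep.IsZero at hA hB
  push Not at hA hB
  obtain ⟨x, a, ha⟩ := hA
  obtain ⟨y, b, hb⟩ := hB
  have e1 : a = c • a := by
    have := congrArg ((fst A B).app x) (hc' x ((inl A B).app x a))
    rwa [map_smul, fst_inl, fst_inl] at this
  have e2 : 0 = c • b := by
    have := congrArg ((snd A B).app y) (hc' y ((inr A B).app y b))
    rwa [map_smul, fst_inr, snd_inr, map_zero, map_zero] at this
  rcases smul_eq_zero.1 e2.symm with h | h
  · rw [h, zero_smul] at e1; exact ha e1
  · exact hb h

/-- The relevant consequence of the Krull-Schmidt theorem. -/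
lemma summand_cases {i j i' j' : ℕ} (h1 : 1 ≤ i) (h2 : i ≤ j) (h3 : j ≤ n + 2)
    (h4 : 1 ≤ i') (h5 : i' ≤ j') (h6 : j' ≤ n + 2) {A : ARep k n ε} (hA : A.Indec)
    (a : A.Hom ((intervalRep k n ε i j).dsum (intervalRep k n ε i' j')))
    (b : ((intervalRep k n ε i j).dsum (intervalRep k n ε i' j')).Hom A)
    (hba : ∀ x v, b.app x (a.app x v) = v) :
    A.Iso (intervalRep k n ε i j) ∨ A.Iso (intervalRep k n ε i' j') := by
  generalize hM : intervalRep k n ε i j = M at a b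
  generalize hN : intervalRep k n ε i' j' = N at a b
  let a1 := (fst M N).comp a
  let a2 := (snd M N).comp a
  let b1 := b.comp (inl M N)
  let b2 := b.comp (inr M N)
  have hsum : ∀ x v, b1.app x (a1.app x v) + b2.app x (a2.app x v) = v := by
    intro x v
    simp only [b1, b2, a1, a2, comp_app]
    rw [← map_add, inl_add_inr, hba]
  have hc : ∃ c : k, ∀ x v, a1.app x (b1.app x v) = c • v := by
    have := end_scalar h1 h3 (k := k) (ε := ε) (i := i)
    rw [hM] at this
    exact this (a1.comp b1)
  have hd : ∃ c : k, ∀ x v, a2.app x (b2.app x v) = c • v := by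
    have := end_scalar h4 h6 (k := k) (ε := ε) (i := i')
    rw [hN] at this
    exact this (a2.comp b2)
  obtain ⟨c, hc⟩ := hc
  obtain ⟨d, hd⟩ := hd
  by_cases hc0 : c = 0
  · by_cases hd0 : d = 0
    · exfalso
      apply hA.1
      intro x v
      have e1 : ∀ w, b1.app x (a1.app x (b1.app x (a1.app x w))) = 0 := by
        intro w; rw [hc, hc0, zero_smul, map_zero]
      have e2 : ∀ w, b2.app x (a2.app x (b2.app x (a2.app x w))) = 0 := by
        intro w; rw [hd, hd0, zero_smul, map_zero]
      -- with `p = b1 a1`, `q = b2 a2`: p + q = 1, p² = q² = 0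
      have s : ∀ w, b2.app x (a2.app x w) = w - b1.app x (a1.app x w) := fun w =>
        eq_sub_of_add_eq' (hsum x w)
      have h3 := e2 (b1.app x (a1.app x v))
      rw [s (b1.app x (a1.app x v)), e1, sub_zero, s, e1, sub_zero] at h3
      have h6 := s v
      rw [h3, sub_zero] at h6
      have h7 := e2 v
      rw [h6, h6] at h7
      exact h7
    · exact Or.inr ⟨a2, bij_of_scalar hA (hN ▸ interval_not_zero h4 h5 h6) a2 b2 d hd0 hd⟩
  · exact Or.inl ⟨a1, bij_of_scalar hA (hM ▸ interval_not_zero h1 h2 h3) a1 b1 c hc0 hc⟩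

lemma summand_maps {A T : ARep k n ε} (h : A.IsSummand T) :
    ∃ (a : A.Hom T) (b : T.Hom A), ∀ x v, b.app x (a.app x v) = v := by
  obtain ⟨B, f, hf⟩ := h
  obtain ⟨g, hgf, hfg⟩ := exists_inv f hf
  refine ⟨g.comp (inl A B), (fst A B).comp f, fun x v => ?_⟩
  rw [comp_app, comp_app, hfg, fst_inl]

/-- A sum of two copies of an interval is not a summand of a sum of two different intervals. -/
lemma not_double {i j i' j' : ℕ} (h1 : 1 ≤ i) (h2 : i ≤ j) (h3 : j ≤ n + 2)
    (h4 : 1 ≤ i') (h5 : i' ≤ j') (h6 : j' ≤ n + 2) (hne : (i, j) ≠ (i', j'))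
    (s1 t1 : (intervalRep k n ε i j).Hom (intervalRep k n ε i j))
    (s2 t2 : (intervalRep k n ε i j).Hom (intervalRep k n ε i' j'))
    (q1 r1 : (intervalRep k n ε i j).Hom (intervalRep k n ε i j))
    (q2 r2 : (intervalRep k n ε i' j').Hom (intervalRep k n ε i j))
    (e1 : ∀ x v, q1.app x (s1.app x v) + q2.app x (s2.app x v) = v)
    (e2 : ∀ x v, q1.app x (t1.app x v) + q2.app x (t2.app x v) = 0)
    (e4 : ∀ x v, r1.app x (t1.app x v) + r2.app x (t2.app x v) = v) : False := by
  simp only [comp_zero h1 h2 h3 h4 h5 h6 hne, add_zero] at e1 e2 e4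
  obtain ⟨a, ha⟩ := end_scalar h1 h3 s1
  obtain ⟨b, hb⟩ := end_scalar h1 h3 t1
  obtain ⟨c, hc⟩ := end_scalar h1 h3 q1
  obtain ⟨d, hd⟩ := end_scalar h1 h3 r1
  simp only [ha, hb, hc, hd, smul_smul] at e1 e2 e4
  have hv : (inn k n ε i j i 1) ≠ 0 := by
    intro h
    have := congrArg (val k n ε i j i) h
    rw [val_inn, if_pos ((supp_iff h1 h3 i).2 ⟨le_rfl, h2⟩), map_zero] at this
    exact one_ne_zero this
  have f1 := e1 i (inn k n ε i j i 1)
  have f2 := e2 i (inn k n ε i j i 1)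
  have f4 := e4 i (inn k n ε i j i 1)
  rcases smul_eq_zero.1 f2 with h | h
  · rcases mul_eq_zero.1 h with h | h
    · rw [h, zero_mul, zero_smul] at f1; exact hv f1.symm
    · rw [h, mul_zero, zero_smul] at f4; exact hv f4.symm
  · exact hv h

lemma iso_symm {M N : ARep k n ε} (h : M.Iso N) : N.Iso M := by
  obtain ⟨f, hf⟩ := h
  obtain ⟨g, h1, h2⟩ := exists_inv f hf
  exact ⟨g, bij_of_inv g f h2 h1⟩

lemma swap_iso (M N : ARep k n ε) : (M.dsum N).Iso (N.dsum M) :=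
  ⟨pair (snd M N) (fst M N), bij_of_inv _ (pair (snd N M) (fst N M))
    (fun _ _ => rfl) (fun _ _ => rfl)⟩

lemma iso_of_inv {M N : ARep k n ε} (f : M.Hom N) (hf : ∀ x, Function.Bijective (f.app x)) :
    M.Iso N := ⟨f, hf⟩

/-- If `A` is an interval, then `A ⊕ A` is not a summand of `M ⊕ N`. -/
lemma not_double' {i j i' j' : ℕ} (h1 : 1 ≤ i) (h2 : i ≤ j) (h3 : j ≤ n + 2)
    (h4 : 1 ≤ i') (h5 : i' ≤ j') (h6 : j' ≤ n + 2) (hne : (i, j) ≠ (i', j'))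
    {A : ARep k n ε} (hA : A.Iso (intervalRep k n ε i j))
    (a : (A.dsum A).Hom ((intervalRep k n ε i j).dsum (intervalRep k n ε i' j')))
    (b : ((intervalRep k n ε i j).dsum (intervalRep k n ε i' j')).Hom (A.dsum A))
    (hba : ∀ x v, b.app x (a.app x v) = v) : False := by
  obtain ⟨f, hf⟩ := hA
  obtain ⟨g, hgf, hfg⟩ := exists_inv f hf
  have key : ∀ x w, b.app x ((inl _ _).app x ((fst _ _).app x (a.app x w))) +
      b.app x ((inr _ _).app x ((snd _ _).app x (a.app x w))) = w := by
    intro x w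
    rw [← map_add, inl_add_inr, hba]
  refine not_double h1 h2 h3 h4 h5 h6 hne
    ((fst _ _).comp (a.comp ((inl A A).comp g))) ((fst _ _).comp (a.comp ((inr A A).comp g)))
    ((snd _ _).comp (a.comp ((inl A A).comp g))) ((snd _ _).comp (a.comp ((inr A A).comp g)))
    (f.comp ((fst A A).comp (b.comp (inl _ _)))) (f.comp ((snd A A).comp (b.comp (inl _ _))))
    (f.comp ((fst A A).comp (b.comp (inr _ _)))) (f.comp ((snd A A).comp (b.comp (inr _ _))))
    ?_ ?_ ?_
  · intro x v
    simp only [comp_app]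
    rw [← map_add, ← map_add, key, fst_inl, hfg]
  · intro x v
    simp only [comp_app]
    rw [← map_add, ← map_add, key, fst_inr, map_zero]
  · intro x v
    simp only [comp_app]
    rw [← map_add, ← map_add, key, snd_inr, hfg]

lemma dsum_basic {i j i' j' : ℕ} (h1 : 1 ≤ i) (h2 : i ≤ j) (h3 : j ≤ n + 2)
    (h4 : 1 ≤ i') (h5 : i' ≤ j') (h6 : j' ≤ n + 2) (hne : (i, j) ≠ (i', j')) :
    ((intervalRep k n ε i j).dsum (intervalRep k n ε i' j')).Basic := by
  intro A hA hsum
  obtain ⟨a, b, hba⟩ := summand_maps hsum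
  rcases summand_cases h1 h2 h3 h4 h5 h6 hA (a.comp (inl A A)) ((fst A A).comp b) (by
    intro x v; simp only [comp_app]; rw [hba, fst_inl]) with h | h
  · exact not_double' h1 h2 h3 h4 h5 h6 hne h a b hba
  · refine not_double' h4 h5 h6 h1 h2 h3 (Ne.symm hne) h
      ((pair (snd _ _) (fst _ _)).comp a) (b.comp (pair (snd _ _) (fst _ _))) ?_
    intro x v
    exact hba x v

end General

/-! ### Transport of extensions along isomorphisms, and the reduction -/

section Transport

variable {k : Type} [Field k] {n : ℕ} {ε : ℕ → Bool}

/-- The condition appearing in the definition of almost rigid representations. -/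
def Good (A B : ARep k n ε) : Prop := ExtZero A B ∨ ExtOneDimIndecMid A B

/-- Transport of a short exact sequence. -/
def SES.transport {A B A' B' : ARep k n ε} (σ : SES B A) (f : A.Hom A') (f' : A'.Hom A)
    (hf : ∀ x v, f'.app x (f.app x v) = v) (hf' : ∀ x v, f.app x (f'.app x v) = v)
    (g : B.Hom B') (g' : B'.Hom B)
    (hg : ∀ x v, g'.app x (g.app x v) = v) (hg' : ∀ x v, g.app x (g'.app x v) = v) :
    SES B' A' where
  E := σ.E
  ι := σ.ι.comp g'
  π := f.comp σ.π
  inj x := by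
    intro v w h
    have := σ.inj x h
    have h2 := congrArg (g.app x) this
    rwa [hg', hg'] at h2
  surj x := by
    intro v
    obtain ⟨w, hw⟩ := σ.surj x (f'.app x v)
    exact ⟨w, by rw [comp_app, hw, hf']⟩
  exct x v := by
    rw [comp_app]
    constructor
    · intro h
      have h2 := congrArg (f'.app x) h
      rw [hf, map_zero] at h2
      obtain ⟨u, hu⟩ := (σ.exct x v).1 h2
      exact ⟨g.app x u, by rw [comp_app, hg, hu]⟩
    · rintro ⟨u, hu⟩
      rw [(σ.exct x v).2 ⟨g'.app x u, hu⟩, map_zero]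

lemma splits_transport {A B A' B' : ARep k n ε} (σ : SES B A) (f : A.Hom A') (f' : A'.Hom A)
    (hf : ∀ x v, f'.app x (f.app x v) = v) (hf' : ∀ x v, f.app x (f'.app x v) = v)
    (g : B.Hom B') (g' : B'.Hom B)
    (hg : ∀ x v, g'.app x (g.app x v) = v) (hg' : ∀ x v, g.app x (g'.app x v) = v) :
    (σ.transport f f' hf hf' g g' hg hg').Splits ↔ σ.Splits := by
  constructor
  · rintro ⟨r, hr⟩
    refine ⟨ARep.Hom.comp g' (show σ.E.Hom B' from r), fun x v => ?_⟩
    have h := hr x (g.app x v)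
    change r.app x (σ.ι.app x (g'.app x (g.app x v))) = _ at h
    rw [hg] at h
    change g'.app x (r.app x (σ.ι.app x v)) = v
    rw [h, hg]
  · rintro ⟨r, hr⟩
    refine ⟨ARep.Hom.comp g r, fun x v => ?_⟩
    change g.app x (r.app x (σ.ι.app x (g'.app x v))) = v
    rw [hr, hg']

lemma good_transport {A B A' B' : ARep k n ε} (hA : A.Iso A') (hB : B.Iso B')
    (h : Good A' B') : Good A B := by
  obtain ⟨f, hfb⟩ := hA
  obtain ⟨f', hf, hf'⟩ := exists_inv f hfb
  obtain ⟨g, hgb⟩ := hB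
  obtain ⟨g', hg, hg'⟩ := exists_inv g hgb
  rcases h with h | ⟨σ, hs, hE, hu⟩
  · left
    intro σ
    exact (splits_transport σ f f' hf hf' g g' hg hg').1 (h _)
  · right
    refine ⟨σ.transport f' f hf' hf g' g hg' hg, ?_, hE, ?_⟩
    · rw [splits_transport]; exact hs
    · intro τ hτ
      obtain ⟨c, hc, φ, h1, h2, h3⟩ := hu (τ.transport f f' hf hf' g g' hg hg')
        (by rw [splits_transport]; exact hτ)
      refine ⟨c, hc, φ, h1, ?_, ?_⟩
      · intro x v
        change φ.app x (σ.ι.app x (g.app x v)) = _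
        rw [h2]
        change τ.ι.app x (g'.app x (g.app x v)) = _
        rw [hg]
      · intro x v
        have h := h3 x v
        change f.app x (τ.π.app x (φ.app x v)) = _ at h
        change τ.π.app x (φ.app x v) = c • f'.app x (σ.π.app x v)
        rw [← map_smul, ← h, hf]

lemma almostRigid_iff {i j i' j' : ℕ} (h1 : 1 ≤ i) (h2 : i ≤ j) (h3 : j ≤ n + 2)
    (h4 : 1 ≤ i') (h5 : i' ≤ j') (h6 : j' ≤ n + 2) (hne : (i, j) ≠ (i', j'))
    (hM : Good (intervalRep k n ε i j) (intervalRep k n ε i j))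
    (hN : Good (intervalRep k n ε i' j') (intervalRep k n ε i' j')) :
    AlmostRigid ((intervalRep k n ε i j).dsum (intervalRep k n ε i' j')) ↔
      Good (intervalRep k n ε i j) (intervalRep k n ε i' j') ∧
      Good (intervalRep k n ε i' j') (intervalRep k n ε i j) := by
  constructor
  · rintro ⟨-, h⟩
    have s1 : (intervalRep k n ε i j).IsSummand
        ((intervalRep k n ε i j).dsum (intervalRep k n ε i' j')) :=
      ⟨intervalRep k n ε i' j', ARep.Hom.id _, fun x => Function.bijective_id⟩
    have s2 : (intervalRep k n ε i' j').IsSummand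
        ((intervalRep k n ε i j).dsum (intervalRep k n ε i' j')) :=
      ⟨intervalRep k n ε i j, swap_iso _ _⟩
    exact ⟨h _ _ (interval_indec h1 h2 h3) (interval_indec h4 h5 h6) s1 s2,
      h _ _ (interval_indec h4 h5 h6) (interval_indec h1 h2 h3) s2 s1⟩
  · rintro ⟨g1, g2⟩
    refine ⟨dsum_basic h1 h2 h3 h4 h5 h6 hne, fun A B hA hB sA sB => ?_⟩
    obtain ⟨a, b, hab⟩ := summand_maps sA
    obtain ⟨c, d, hcd⟩ := summand_maps sB
    rcases summand_cases h1 h2 h3 h4 h5 h6 hA a b hab with hA' | hA' <;>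
    rcases summand_cases h1 h2 h3 h4 h5 h6 hB c d hcd with hB' | hB'
    · exact good_transport hA' hB' hM
    · exact good_transport hA' hB' g1
    · exact good_transport hA' hB' g2
    · exact good_transport hA' hB' hN

end Transport

/-! ### Computation of extensions between intervals -/

section Ext

variable {k : Type} [Field k] {n : ℕ} {ε : ℕ → Bool}

/-- A family of linear maps landing in the kernel of `π` factors through `ι`. -/
lemma SES.factor {A B : ARep k n ε} (τ : SES B A) {W : Type} [AddCommGroup W] [Module k W]
    (x : ℕ) (f : W →ₗ[k] τ.E.V x) (h : ∀ w, τ.π.app x (f w) = 0) :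
    ∃ g : W →ₗ[k] B.V x, ∀ w, τ.ι.app x (g w) = f w := by
  obtain ⟨r, hr⟩ := LinearMap.exists_leftInverse_of_injective (τ.ι.app x)
    (LinearMap.ker_eq_bot.2 (τ.inj x))
  refine ⟨r.comp f, fun w => ?_⟩
  obtain ⟨u, hu⟩ := (τ.exct x (f w)).1 (h w)
  have hr' : r (τ.ι.app x u) = u := LinearMap.congr_fun hr u
  rw [LinearMap.comp_apply, ← hu, hr']

lemma SES.pi_iota {A B : ARep k n ε} (τ : SES B A) (x : ℕ) (u : B.V x) :
    τ.π.app x (τ.ι.app x u) = 0 := (τ.exct x _).2 ⟨u, rfl⟩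

lemma defect {i j i' j' : ℕ} (τ : SES (intervalRep k n ε i' j') (intervalRep k n ε i j)) :
    ∃ (s : ∀ x, (intervalRep k n ε i j).V x →ₗ[k] τ.E.V x) (e : ℕ → k),
      (∀ x v, τ.π.app x (s x v) = v) ∧
      (∀ l, ε l = true → ∀ v, τ.E.fwd l (s l v) =
        s (l + 1) ((intervalRep k n ε i j).fwd l v) +
          τ.ι.app (l + 1) (inn k n ε i' j' (l + 1) (e l * val k n ε i j l v))) ∧
      (∀ l, ε l = false → ∀ v, τ.E.bwd l (s (l + 1) v) =
        s l ((intervalRep k n ε i j).bwd l v) +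
          τ.ι.app l (inn k n ε i' j' l (e l * val k n ε i j (l + 1) v))) := by
  have hs : ∀ x, ∃ s : (intervalRep k n ε i j).V x →ₗ[k] τ.E.V x,
      ∀ v, τ.π.app x (s v) = v := by
    intro x
    obtain ⟨s, hs⟩ := LinearMap.exists_rightInverse_of_surjective (τ.π.app x)
      (LinearMap.range_eq_top.2 (τ.surj x))
    exact ⟨s, fun v => LinearMap.congr_fun hs v⟩
  choose s hs using hs
  have he : ∀ l, ∃ e : k, (ε l = true → ∀ v, τ.E.fwd l (s l v) =
        s (l + 1) ((intervalRep k n ε i j).fwd l v) +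
          τ.ι.app (l + 1) (inn k n ε i' j' (l + 1) (e * val k n ε i j l v))) ∧
      (ε l = false → ∀ v, τ.E.bwd l (s (l + 1) v) =
        s l ((intervalRep k n ε i j).bwd l v) +
          τ.ι.app l (inn k n ε i' j' l (e * val k n ε i j (l + 1) v))) := by
    intro l
    cases hl : ε l with
    | true =>
      obtain ⟨g, hg⟩ := τ.factor (l + 1) ((τ.E.fwd l).comp (s l) -
        (s (l + 1)).comp ((intervalRep k n ε i j).fwd l)) (by
          intro w
          rw [LinearMap.sub_apply, LinearMap.comp_apply, LinearMap.comp_apply, map_sub,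
            τ.π.comm_fwd, hs, hs, sub_self])
      obtain ⟨c, hc⟩ := lin_scalar g
      refine ⟨c, fun _ v => ?_, fun h => by simp at h⟩
      rw [← hc, hg, LinearMap.sub_apply, LinearMap.comp_apply, LinearMap.comp_apply,
        add_sub_cancel]
    | false =>
      obtain ⟨g, hg⟩ := τ.factor l ((τ.E.bwd l).comp (s (l + 1)) -
        (s l).comp ((intervalRep k n ε i j).bwd l)) (by
          intro w
          rw [LinearMap.sub_apply, LinearMap.comp_apply, LinearMap.comp_apply, map_sub,
            τ.π.comm_bwd, hs, hs, sub_self])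
      obtain ⟨c, hc⟩ := lin_scalar g
      refine ⟨c, fun h => by simp at h, fun _ v => ?_⟩
      rw [← hc, hg, LinearMap.sub_apply, LinearMap.comp_apply, LinearMap.comp_apply,
        add_sub_cancel]
  choose e he using he
  exact ⟨s, e, hs, fun l => (he l).1, fun l => (he l).2⟩

/-- A section of `π` gives a retraction of `ι`. -/
lemma splits_of_section {A B : ARep k n ε} (τ : SES B A) (s : A.Hom τ.E)
    (hs : ∀ x v, τ.π.app x (s.app x v) = v) : τ.Splits := by
  have hr : ∀ x, ∃ r : τ.E.V x →ₗ[k] B.V x, ∀ w,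
      τ.ι.app x (r w) = w - s.app x (τ.π.app x w) := by
    intro x
    obtain ⟨g, hg⟩ := τ.factor x (LinearMap.id - (s.app x).comp (τ.π.app x)) (by
      intro w
      rw [LinearMap.sub_apply, LinearMap.comp_apply, LinearMap.id_apply, map_sub, hs, sub_self])
    exact ⟨g, hg⟩
  choose r hr using hr
  refine ⟨⟨r, ?_, ?_⟩, ?_⟩
  · intro l v
    apply τ.inj
    rw [hr, τ.ι.comm_fwd, hr, τ.π.comm_fwd, s.comm_fwd, map_sub]
  · intro l v
    apply τ.inj
    rw [hr, τ.ι.comm_bwd, hr, τ.π.comm_bwd, s.comm_bwd, map_sub]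
  · intro x v
    apply τ.inj
    change τ.ι.app x (r x _) = _
    rw [hr, τ.pi_iota, map_zero, sub_zero]

lemma splits_of_solution {i j i' j' : ℕ}
    (τ : SES (intervalRep k n ε i' j') (intervalRep k n ε i j))
    (s : ∀ x, (intervalRep k n ε i j).V x →ₗ[k] τ.E.V x) (e : ℕ → k)
    (hs : ∀ x v, τ.π.app x (s x v) = v)
    (hf : ∀ l, ε l = true → ∀ v, τ.E.fwd l (s l v) =
        s (l + 1) ((intervalRep k n ε i j).fwd l v) +
          τ.ι.app (l + 1) (inn k n ε i' j' (l + 1) (e l * val k n ε i j l v)))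
    (hb : ∀ l, ε l = false → ∀ v, τ.E.bwd l (s (l + 1) v) =
        s l ((intervalRep k n ε i j).bwd l v) +
          τ.ι.app l (inn k n ε i' j' l (e l * val k n ε i j (l + 1) v)))
    (h : ℕ → k)
    (H1 : ∀ l, ε l = true → SuppCond n i j l → SuppCond n i' j' (l + 1) →
      (if SuppCond n i' j' l then h l else 0) + e l =
        if SuppCond n i j (l + 1) then h (l + 1) else 0)
    (H2 : ∀ l, ε l = false → SuppCond n i j (l + 1) → SuppCond n i' j' l →
      (if SuppCond n i' j' (l + 1) then h (l + 1) else 0) + e l =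
        if SuppCond n i j l then h l else 0) : τ.Splits := by
  refine splits_of_section τ
    ⟨fun x => s x + (τ.ι.app x).comp ((inn k n ε i' j' x).comp (h x • val k n ε i j x)), ?_, ?_⟩ ?_
  · intro l v
    cases hl : ε l with
    | false => rw [ARep.fwd_zero _ l hl, ARep.fwd_zero _ l hl]; simp
    | true =>
      simp only [LinearMap.add_apply, LinearMap.comp_apply, LinearMap.smul_apply, smul_eq_mul]
      rw [map_add, hf l hl, add_assoc]
      congr 1
      rw [← τ.ι.comm_fwd, ← map_add]
      congr 1
      apply val_inj
      rw [map_add, val_inn, val_fwd, val_inn, val_fwd, val_inn]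
      by_cases a1 : SuppCond n i j l
      · by_cases a2 : SuppCond n i' j' (l + 1)
        · have := H1 l hl a1 a2
          simp only [a2, hl, if_true, true_and]
          split_ifs at this ⊢ <;> linear_combination (-val k n ε i j l v) * this
        · simp [a2]
      · rw [val_off a1 v]; simp
  · intro l v
    cases hl : ε l with
    | true => rw [ARep.bwd_zero _ l hl, ARep.bwd_zero _ l hl]; simp
    | false =>
      simp only [LinearMap.add_apply, LinearMap.comp_apply, LinearMap.smul_apply, smul_eq_mul]
      rw [map_add, hb l hl, add_assoc]
      congr 1
      rw [← τ.ι.comm_bwd, ← map_add]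
      congr 1
      apply val_inj
      rw [map_add, val_inn, val_bwd, val_inn, val_bwd, val_inn]
      by_cases a1 : SuppCond n i j (l + 1)
      · by_cases a2 : SuppCond n i' j' l
        · have := H2 l hl a1 a2
          simp only [a2, hl, if_true, true_and]
          split_ifs at this ⊢ <;> linear_combination (-val k n ε i j (l + 1) v) * this
        · simp [a2]
      · rw [val_off a1 v]; simp
  · intro x v
    simp only [LinearMap.add_apply, LinearMap.comp_apply]
    rw [map_add, hs, τ.pi_iota, add_zero]

/-- The two intervals overlap and `Ext¹(M(i,j), M(i',j')) ≠ 0`. -/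
def Ext2 (ε : ℕ → Bool) (i j i' j' : ℕ) : Prop :=
  i' ≤ j ∧ i ≤ j' ∧ ((i < i' ∧ ε (i' - 1) = true) ∨ (i' < i ∧ ε (i - 1) = false)) ∧
    ((j' < j ∧ ε j' = false) ∨ (j < j' ∧ ε j = true))

/-- A partial sum solving the interior equations. -/
def partialSum (ε : ℕ → Bool) (e : ℕ → k) : ℕ → k
  | 0 => 0
  | l + 1 => if ε l = true then partialSum ε e l + e l else partialSum ε e l - e l

lemma solve {i j i' j' : ℕ} (h1 : 1 ≤ i) (h2 : i ≤ j) (h3 : j ≤ n + 2)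
    (h4 : 1 ≤ i') (h5 : i' ≤ j') (h6 : j' ≤ n + 2) (hX : ¬Ext2 ε i j i' j')
    (ha : ¬(j + 1 = i' ∧ ε j = true)) (hb : ¬(j' + 1 = i ∧ ε j' = false)) (e : ℕ → k) :
    ∃ h : ℕ → k,
    (∀ l, ε l = true → SuppCond n i j l → SuppCond n i' j' (l + 1) →
      (if SuppCond n i' j' l then h l else 0) + e l =
        if SuppCond n i j (l + 1) then h (l + 1) else 0) ∧
    (∀ l, ε l = false → SuppCond n i j (l + 1) → SuppCond n i' j' l →
      (if SuppCond n i' j' (l + 1) then h (l + 1) else 0) + e l =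
        if SuppCond n i j l then h l else 0) := by
  simp only [supp_iff h1 h3, supp_iff h4 h6]
  set g := partialSum ε e with hg
  have g1 : ∀ l, ε l = true → g (l + 1) = g l + e l := by
    intro l hl; rw [hg, partialSum, if_pos hl]
  have g2 : ∀ l, ε l = false → g (l + 1) = g l - e l := by
    intro l hl; rw [hg, partialSum, if_neg (by simp [hl])]
  by_cases hov : i' ≤ j ∧ i ≤ j'
  · have hC : ∃ C : k, ((i < i' ∧ ε (i' - 1) = true) → e (i' - 1) = g i' + C) ∧
        ((i' < i ∧ ε (i - 1) = false) → g i + C + e (i - 1) = 0) ∧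
        ((j' < j ∧ ε j' = false) → e j' = g j' + C) ∧
        ((j < j' ∧ ε j = true) → g j + C + e j = 0) := by
      unfold Ext2 at hX
      by_cases L1 : i < i' ∧ ε (i' - 1) = true
      · refine ⟨e (i' - 1) - g i', fun _ => by ring, fun h => by omega, fun h => ?_, fun h => ?_⟩
        · exact absurd ⟨hov.1, hov.2, Or.inl L1, Or.inl h⟩ hX
        · exact absurd ⟨hov.1, hov.2, Or.inl L1, Or.inr h⟩ hX
      by_cases L2 : i' < i ∧ ε (i - 1) = false
      · refine ⟨-e (i - 1) - g i, fun h => by omega, fun _ => by ring, fun h => ?_, fun h => ?_⟩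
        · exact absurd ⟨hov.1, hov.2, Or.inr L2, Or.inl h⟩ hX
        · exact absurd ⟨hov.1, hov.2, Or.inr L2, Or.inr h⟩ hX
      by_cases R1 : j' < j ∧ ε j' = false
      · exact ⟨e j' - g j', fun h => absurd h L1, fun h => absurd h L2, fun _ => by ring,
          fun h => by omega⟩
      · exact ⟨-e j - g j, fun h => absurd h L1, fun h => absurd h L2, fun h => absurd h R1,
          fun _ => by ring⟩
    obtain ⟨C, c1, c2, c3, c4⟩ := hC
    refine ⟨fun x => g x + C, ?_, ?_⟩
    · intro l hl m1 m2
      by_cases b1 : i' ≤ l ∧ l ≤ j' <;> by_cases b2 : i ≤ l + 1 ∧ l + 1 ≤ j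
      · rw [if_pos b1, if_pos b2]; show g l + C + e l = g (l + 1) + C; rw [g1 l hl]; ring
      · rw [if_pos b1, if_neg b2]
        have : l = j := by omega
        subst this
        exact c4 ⟨by omega, hl⟩
      · rw [if_neg b1, if_pos b2]
        have : i' = l + 1 := by omega
        subst this
        rw [zero_add]
        exact c1 ⟨by omega, hl⟩
      · omega
    · intro l hl m1 m2
      by_cases b1 : i' ≤ l + 1 ∧ l + 1 ≤ j' <;> by_cases b2 : i ≤ l ∧ l ≤ j
      · rw [if_pos b1, if_pos b2]; show g (l + 1) + C + e l = g l + C; rw [g2 l hl]; ring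
      · rw [if_pos b1, if_neg b2]
        have : i = l + 1 := by omega
        subst this
        exact c2 ⟨by omega, hl⟩
      · rw [if_neg b1, if_pos b2]
        have : l = j' := by omega
        subst this
        rw [zero_add]
        exact c3 ⟨by omega, hl⟩
      · omega
  · refine ⟨0, ?_, ?_⟩
    · intro l hl m1 m2
      exfalso
      have : l = j := by omega
      subst this
      exact ha ⟨by omega, hl⟩
    · intro l hl m1 m2
      exfalso
      have : l = j' := by omega
      subst this
      exact hb ⟨by omega, hl⟩

lemma extZero_of {i j i' j' : ℕ} (h1 : 1 ≤ i) (h2 : i ≤ j) (h3 : j ≤ n + 2)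
    (h4 : 1 ≤ i') (h5 : i' ≤ j') (h6 : j' ≤ n + 2) (hX : ¬Ext2 ε i j i' j')
    (ha : ¬(j + 1 = i' ∧ ε j = true)) (hb : ¬(j' + 1 = i ∧ ε j' = false)) :
    ExtZero (intervalRep k n ε i j) (intervalRep k n ε i' j') := by
  intro τ
  obtain ⟨s, e, hs, hf, hbw⟩ := defect τ
  obtain ⟨h, H1, H2⟩ := solve h1 h2 h3 h4 h5 h6 hX ha hb e
  exact splits_of_solution τ s e hs hf hbw h H1 H2

end Ext

/-! ### Nonsplit extensions between intervals -/

section NonSplit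

variable {k : Type} [Field k] {n : ℕ} {ε : ℕ → Bool}

/-- The canonical morphism between two intervals. -/
def can (k : Type) [Field k] (n : ℕ) (ε : ℕ → Bool) (i j i' j' : ℕ)
    (H1 : ∀ l, ε l = true → SuppCond n i j l → SuppCond n i' j' (l + 1) →
      (SuppCond n i' j' l ↔ SuppCond n i j (l + 1)))
    (H2 : ∀ l, ε l = false → SuppCond n i j (l + 1) → SuppCond n i' j' l →
      (SuppCond n i' j' (l + 1) ↔ SuppCond n i j l)) :
    (intervalRep k n ε i j).Hom (intervalRep k n ε i' j') where
  app x := (inn k n ε i' j' x).comp (val k n ε i j x)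
  comm_fwd l v := by
    simp only [LinearMap.comp_apply]
    apply val_inj
    rw [val_inn, val_fwd, val_fwd, val_inn]
    by_cases h : SuppCond n i j l
    · cases hl : ε l with
      | false => simp
      | true =>
        have := H1 l hl h
        by_cases a : SuppCond n i' j' (l + 1)
        · simp [a, this a]
        · simp [a]
    · rw [val_off h]; simp
  comm_bwd l v := by
    simp only [LinearMap.comp_apply]
    apply val_inj
    rw [val_inn, val_bwd, val_bwd, val_inn]
    by_cases h : SuppCond n i j (l + 1)
    · cases hl : ε l with
      | true => simp
      | false =>
        have := H2 l hl h
        by_cases a : SuppCond n i' j' l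
        · simp [a, this a]
        · simp [a]
    · rw [val_off h]; simp

lemma can_app {i j i' j' : ℕ} (H1 H2) (x : ℕ) (v : (intervalRep k n ε i j).V x) :
    (can k n ε i j i' j' H1 H2).app x v = inn k n ε i' j' x (val k n ε i j x v) := rfl

/-- A decomposable nonsplit extension rules out `Good`. -/
lemma not_good_of {A B X Y : ARep k n ε} (τ : SES B A) (hτ : ¬τ.Splits)
    (hE : τ.E.Iso (X.dsum Y)) (hX : ¬X.IsZero) (hY : ¬Y.IsZero) : ¬Good A B := by
  rintro (h | ⟨σ, hσ, hI, h⟩)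
  · exact hτ (h τ)
  · obtain ⟨c, hc, φ, hφ, -, -⟩ := h τ hτ
    obtain ⟨f, hf⟩ := hE
    rcases hI.2 X Y ⟨f.comp φ, fun x => (hf x).comp (hφ x)⟩ with h | h
    · exact hX h
    · exact hY h

lemma iso_refl (M : ARep k n ε) : M.Iso M := ⟨ARep.Hom.id M, fun _ => Function.bijective_id⟩

lemma not_good {i j i' j' : ℕ} (h1 : 1 ≤ i) (h2 : i ≤ j) (h3 : j ≤ n + 2)
    (h4 : 1 ≤ i') (h5 : i' ≤ j') (h6 : j' ≤ n + 2) (hX : Ext2 ε i j i' j') :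
    ¬Good (intervalRep k n ε i j) (intervalRep k n ε i' j') := by
  obtain ⟨o1, o2, hL, hR⟩ := hX
  have t1 : ∀ l, ε l = true → i' < i → l + 1 ≠ i := by
    rintro l hl hi rfl
    rcases hL with ⟨h, _⟩ | ⟨_, h⟩
    · omega
    · simp [hl] at h
  have t2 : ∀ l, ε l = false → i < i' → l + 1 ≠ i' := by
    rintro l hl hi rfl
    rcases hL with ⟨_, h⟩ | ⟨h, _⟩
    · simp [hl] at h
    · omega
  have t3 : ∀ l, ε l = true → j' < j → l ≠ j' := by
    rintro l hl hi rfl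
    rcases hR with ⟨_, h⟩ | ⟨h, _⟩
    · simp [hl] at h
    · omega
  have t4 : ∀ l, ε l = false → j < j' → l ≠ j := by
    rintro l hl hi rfl
    rcases hR with ⟨h, _⟩ | ⟨_, h⟩
    · omega
    · simp [hl] at h
  have hne1 : i ≠ i' := by omega
  have hne2 : j ≠ j' := by omega
  clear hL hR
  have sI := supp_iff (n := n) h1 h3
  have sJ := supp_iff (n := n) h4 h6
  have sK := supp_iff (n := n) h1 h6
  have sL := supp_iff (n := n) h4 h3
  let a1 : (intervalRep k n ε i' j').Hom (intervalRep k n ε i j') := can k n ε i' j' i j'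
    (by intro l hl; simp only [sJ, sK]; have := t1 l hl; omega)
    (by intro l hl; simp only [sJ, sK]; have := t2 l hl; omega)
  let a2 : (intervalRep k n ε i' j').Hom (intervalRep k n ε i' j) := can k n ε i' j' i' j
    (by intro l hl; simp only [sJ, sL]; have := t3 l hl; omega)
    (by intro l hl; simp only [sJ, sL]; have := t4 l hl; omega)
  let b1 : (intervalRep k n ε i j').Hom (intervalRep k n ε i j) := can k n ε i j' i j
    (by intro l hl; simp only [sI, sK]; have := t3 l hl; omega)
    (by intro l hl; simp only [sI, sK]; have := t4 l hl; omega)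
  let b2 : (intervalRep k n ε i' j).Hom (intervalRep k n ε i j) := can k n ε i' j i j
    (by intro l hl; simp only [sI, sL]; have := t1 l hl; omega)
    (by intro l hl; simp only [sI, sL]; have := t2 l hl; omega)
  let τ : SES (intervalRep k n ε i' j') (intervalRep k n ε i j) :=
    { E := (intervalRep k n ε i j').dsum (intervalRep k n ε i' j)
      ι := pair a1 a2
      π := copair b1 (b2.smul (-1))
      inj := by
        intro x
        rw [inj_iff]
        intro v hv
        have e1 := congrArg (fun w => val k n ε i j' x ((fst _ _).app x w)) hv
        have e2 := congrArg (fun w => val k n ε i' j x ((snd _ _).app x w)) hv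
        simp only [fst_pair, snd_pair, a1, a2, can_app, val_inn, map_zero, sK, sL] at e1 e2
        by_cases hx : SuppCond n i' j' x
        · apply val_inj
          rw [map_zero]
          rw [sJ] at hx
          by_cases hk : i ≤ x
          · rwa [if_pos ⟨hk, hx.2⟩] at e1
          · rwa [if_pos (by omega)] at e2
        · exact eq_zero_off hx v
      surj := by
        intro x v
        by_cases hx : SuppCond n i j x
        · by_cases hk : x ≤ j'
          · refine ⟨(inl _ _).app x (inn k n ε i j' x (val k n ε i j x v)), ?_⟩
            rw [copair_app, fst_inl, snd_inl, map_zero, add_zero]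
            apply val_inj
            simp only [b1, can_app, val_inn]
            rw [if_pos hx, if_pos ((sK x).2 ⟨((sI x).1 hx).1, hk⟩)]
          · refine ⟨(inr _ _).app x (inn k n ε i' j x (-val k n ε i j x v)), ?_⟩
            rw [copair_app, fst_inr, snd_inr, map_zero, zero_add]
            apply val_inj
            rw [smul_app, map_smul]
            simp only [b2, can_app, val_inn]
            have := (sI x).1 hx
            rw [if_pos hx, if_pos ((sL x).2 (by omega))]
            simp
        · exact ⟨0, by rw [map_zero, eq_zero_off hx v]⟩
      exct := by
        intro x w
        have hw1 := fun h => val_off (k := k) (ε := ε) (n := n) (i := i) (j := j') (x := x) h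
          ((fst _ _).app x w)
        have hw2 := fun h => val_off (k := k) (ε := ε) (n := n) (i := i') (j := j) (x := x) h
          ((snd _ _).app x w)
        have key : (copair b1 (b2.smul (-1))).app x w = 0 ↔
            (SuppCond n i j x → val k n ε i j' x ((fst _ _).app x w) =
              val k n ε i' j x ((snd _ _).app x w)) := by
          rw [copair_app, smul_app]
          simp only [b1, b2, can_app]
          constructor
          · intro h hx
            have := congrArg (val k n ε i j x) h
            rw [map_add, map_smul, val_inn, val_inn, if_pos hx, if_pos hx, map_zero] at this
            simp only [smul_eq_mul] at this
            linear_combination this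
          · intro h
            apply val_inj
            rw [map_add, map_smul, val_inn, val_inn, map_zero]
            by_cases hx : SuppCond n i j x
            · rw [if_pos hx, if_pos hx, h hx]; simp
            · simp [hx]
        rw [key]
        constructor
        · intro h
          refine ⟨inn k n ε i' j' x (if SuppCond n i j' x then
            val k n ε i j' x ((fst _ _).app x w) else val k n ε i' j x ((snd _ _).app x w)), ?_⟩
          apply dsum_ext
          · rw [fst_pair]
            apply val_inj
            simp only [a1, can_app, val_inn]
            simp only [sI, sJ, sK, sL] at h hw1 hw2 ⊢
            by_cases q1 : i ≤ x ∧ x ≤ j'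
            · by_cases q2 : i' ≤ x ∧ x ≤ j'
              · simp only [if_pos q1, if_pos q2]
              · simp only [if_pos q1, if_neg q2]
                rw [h (by omega), hw2 (by omega)]
            · rw [if_neg q1, hw1 q1]
          · rw [snd_pair]
            apply val_inj
            simp only [a2, can_app, val_inn]
            simp only [sI, sJ, sK, sL] at h hw1 hw2 ⊢
            by_cases q1 : i' ≤ x ∧ x ≤ j
            · by_cases q2 : i' ≤ x ∧ x ≤ j'
              · by_cases q3 : i ≤ x ∧ x ≤ j'
                · simp only [if_pos q1, if_pos q2, if_pos q3]
                  exact h (by omega)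
                · simp only [if_pos q1, if_pos q2, if_neg q3]
              · simp only [if_pos q1, if_neg q2]
                rw [← h (by omega), hw1 (by omega)]
            · rw [if_neg q1, hw2 q1]
        · rintro ⟨u, rfl⟩ hx
          rw [fst_pair, snd_pair]
          simp only [a1, a2, can_app, val_inn]
          by_cases hu : SuppCond n i' j' x
          · simp only [sI, sJ, sK, sL] at hx hu ⊢
            rw [if_pos (by omega), if_pos (by omega)]
          · rw [val_off hu]; simp }
  refine not_good_of τ ?_ (iso_refl _) (interval_not_zero h1 o2 h6) (interval_not_zero h4 o1 h3)
  rintro ⟨r, hr⟩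
  have hz1 := comp_zero h4 h5 h6 h1 o2 h6 (by simp; omega) a1 (r.comp (inl _ _))
  have hz2 := comp_zero h4 h5 h6 h4 o1 h3 (by simp; omega) a2 (r.comp (inr _ _))
  refine interval_not_zero (k := k) (ε := ε) h4 h5 h6 fun x v => ?_
  rw [← hr x v]
  change r.app x ((pair a1 a2).app x v) = 0
  rw [← inl_add_inr ((pair a1 a2).app x v), map_add, fst_pair, snd_pair]
  have := hz1 x v
  have h' := hz2 x v
  rw [comp_app] at this h'
  rw [this, h', add_zero]

end NonSplit
/-! ### Adjacent intervals -/

section Adjacent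

variable {k : Type} [Field k] {n : ℕ} {ε : ℕ → Bool}

set_option maxHeartbeats 4000000 in
lemma adjacent_aux {i j i' j' a b l0 : ℕ} (h1 : 1 ≤ i) (h2 : i ≤ j) (h3 : j ≤ n + 2)
    (h4 : 1 ≤ i') (h5 : i' ≤ j') (h6 : j' ≤ n + 2)
    (g1 : 1 ≤ a) (g2 : a ≤ b) (g3 : b ≤ n + 2) (hne : (i', j') ≠ (a, b))
    (hU : ∀ x, SuppCond n a b x ↔ SuppCond n i j x ∨ SuppCond n i' j' x)
    (hd : ∀ x, SuppCond n i j x → ¬SuppCond n i' j' x)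
    (T : ∀ l, ε l = true → SuppCond n i j l → SuppCond n i' j' (l + 1) → l = l0)
    (F : ∀ l, ε l = false → SuppCond n i j (l + 1) → SuppCond n i' j' l → l = l0)
    (T' : ∀ l, ε l = true → SuppCond n i' j' l → ¬SuppCond n i j (l + 1))
    (F' : ∀ l, ε l = false → SuppCond n i' j' (l + 1) → ¬SuppCond n i j l) :
    ExtOneDimIndecMid (intervalRep k n ε i j) (intervalRep k n ε i' j') := by
  let α : (intervalRep k n ε i' j').Hom (intervalRep k n ε a b) := can k n ε i' j' a b
    (by intro l hl; have := T' l hl; have := hU l; have := hU (l + 1); tauto)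
    (by intro l hl; have := F' l hl; have := hU l; have := hU (l + 1); tauto)
  let β : (intervalRep k n ε a b).Hom (intervalRep k n ε i j) := can k n ε a b i j
    (by intro l hl; have := T' l hl; have := hU l; have := hU (l + 1); tauto)
    (by intro l hl; have := F' l hl; have := hU l; have := hU (l + 1); tauto)
  let σ : SES (intervalRep k n ε i' j') (intervalRep k n ε i j) :=
    { E := intervalRep k n ε a b
      ι := α
      π := β
      inj := by
        intro x
        rw [inj_iff]
        intro v hv
        by_cases hx : SuppCond n i' j' x
        · have := congrArg (val k n ε a b x) hv
          simp only [α, can_app, val_inn, map_zero] at this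
          rw [if_pos ((hU x).2 (Or.inr hx))] at this
          exact val_inj (by rw [this, map_zero])
        · exact eq_zero_off hx v
      surj := by
        intro x v
        refine ⟨inn k n ε a b x (val k n ε i j x v), ?_⟩
        apply val_inj
        simp only [β, can_app, val_inn]
        by_cases hx : SuppCond n i j x
        · rw [if_pos hx, if_pos ((hU x).2 (Or.inl hx))]
        · rw [if_neg hx, val_off hx]
      exct := by
        intro x w
        constructor
        · intro h
          refine ⟨inn k n ε i' j' x (val k n ε a b x w), ?_⟩
          apply val_inj
          have := congrArg (val k n ε i j x) h
          simp only [α, β, can_app, val_inn, map_zero] at this ⊢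
          by_cases hx : SuppCond n i j x
          · rw [if_pos hx] at this
            rw [this]; simp
          · by_cases hy : SuppCond n i' j' x
            · rw [if_pos hy, if_pos ((hU x).2 (Or.inr hy))]
            · rw [val_off (show ¬SuppCond n a b x by rw [hU]; tauto)]; simp
        · rintro ⟨u, rfl⟩
          apply val_inj
          simp only [α, β, can_app, val_inn, map_zero]
          by_cases hx : SuppCond n i j x
          · rw [val_off (hd x hx)]; simp
          · rw [if_neg hx] }
  refine ⟨σ, ?_, interval_indec g1 g2 g3, ?_⟩
  · rintro ⟨r, hr⟩
    refine interval_not_zero (k := k) (ε := ε) h4 h5 h6 fun x v => ?_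
    rw [← hr x v]
    exact comp_zero h4 h5 h6 g1 g2 g3 hne α r x v
  · intro τ hτ
    obtain ⟨s, e, hs, hf, hb⟩ := defect τ
    have he : e l0 ≠ 0 := by
      intro h0
      apply hτ
      refine splits_of_solution τ s e hs hf hb 0 ?_ ?_
      · intro l hl p q
        obtain rfl := T l hl p q
        simp [h0]
      · intro l hl p q
        obtain rfl := F l hl p q
        simp [h0]
    have hc : (e l0)⁻¹ ≠ 0 := inv_ne_zero he
    refine ⟨(e l0)⁻¹, hc, ?_⟩
    let φ : (intervalRep k n ε a b).Hom τ.E :=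
      { app := fun x => (τ.ι.app x).comp ((inn k n ε i' j' x).comp (val k n ε a b x)) +
          (e l0)⁻¹ • (s x).comp ((inn k n ε i j x).comp (val k n ε a b x))
        comm_fwd := by
          intro l v
          cases hl : ε l with
          | false => rw [ARep.fwd_zero _ l hl, ARep.fwd_zero _ l hl]; simp
          | true =>
            simp only [LinearMap.add_apply, LinearMap.comp_apply, LinearMap.smul_apply]
            have E1 : inn k n ε i j (l + 1) (val k n ε a b (l + 1)
                ((intervalRep k n ε a b).fwd l v)) =
                (intervalRep k n ε i j).fwd l (inn k n ε i j l (val k n ε a b l v)) := by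
              apply val_inj
              rw [val_inn, val_fwd, val_fwd, val_inn]
              by_cases q : SuppCond n i j (l + 1)
              · by_cases q' : SuppCond n i j l
                · simp [q, q', hl, hU]
                · rw [val_off (show ¬SuppCond n a b l by rw [hU]; have := T' l hl; tauto)]; simp
              · simp [q]
            have E2 : inn k n ε i' j' (l + 1) (val k n ε a b (l + 1)
                ((intervalRep k n ε a b).fwd l v)) =
                (intervalRep k n ε i' j').fwd l (inn k n ε i' j' l (val k n ε a b l v)) +
                (e l0)⁻¹ • inn k n ε i' j' (l + 1) (e l * val k n ε i j l
                  (inn k n ε i j l (val k n ε a b l v))) := by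
              apply val_inj
              rw [map_add, map_smul, val_inn, val_inn, val_fwd, val_fwd, val_inn, val_inn]
              by_cases q : SuppCond n i' j' (l + 1)
              · by_cases q' : SuppCond n i' j' l
                · have : ¬SuppCond n i j l := fun h => hd l h q'
                  simp [q, q', hl, hU, this]
                · by_cases q2 : SuppCond n i j l
                  · obtain rfl := T l hl q2 q
                    simp [q, q', hl, hU, q2, he]
                  · rw [val_off (show ¬SuppCond n a b l by rw [hU]; tauto)]; simp
              · simp [q]
            rw [E1, E2, map_add, map_add, map_smul, map_smul, τ.ι.comm_fwd, hf l hl, smul_add]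
            abel
        comm_bwd := by
          intro l v
          cases hl : ε l with
          | true => rw [ARep.bwd_zero _ l hl, ARep.bwd_zero _ l hl]; simp
          | false =>
            simp only [LinearMap.add_apply, LinearMap.comp_apply, LinearMap.smul_apply]
            have E1 : inn k n ε i j l (val k n ε a b l
                ((intervalRep k n ε a b).bwd l v)) =
                (intervalRep k n ε i j).bwd l
                  (inn k n ε i j (l + 1) (val k n ε a b (l + 1) v)) := by
              apply val_inj
              rw [val_inn, val_bwd, val_bwd, val_inn]
              by_cases q : SuppCond n i j l
              · by_cases q' : SuppCond n i j (l + 1)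
                · simp [q, q', hl, hU]
                · rw [val_off (show ¬SuppCond n a b (l + 1) by
                    rw [hU]; have := F' l hl; tauto)]
                  simp
              · simp [q]
            have E2 : inn k n ε i' j' l (val k n ε a b l
                ((intervalRep k n ε a b).bwd l v)) =
                (intervalRep k n ε i' j').bwd l
                  (inn k n ε i' j' (l + 1) (val k n ε a b (l + 1) v)) +
                (e l0)⁻¹ • inn k n ε i' j' l (e l * val k n ε i j (l + 1)
                  (inn k n ε i j (l + 1) (val k n ε a b (l + 1) v))) := by
              apply val_inj
              rw [map_add, map_smul, val_inn, val_inn, val_bwd, val_bwd, val_inn, val_inn]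
              by_cases q : SuppCond n i' j' l
              · by_cases q' : SuppCond n i' j' (l + 1)
                · have : ¬SuppCond n i j (l + 1) := fun h => hd _ h q'
                  simp [q, q', hl, hU, this]
                · by_cases q2 : SuppCond n i j (l + 1)
                  · obtain rfl := F l hl q2 q
                    simp [q, q', hl, hU, q2, he]
                  · rw [val_off (show ¬SuppCond n a b (l + 1) by rw [hU]; tauto)]; simp
              · simp [q]
            rw [E1, E2, map_add, map_add, map_smul, map_smul, τ.ι.comm_bwd, hb l hl, smul_add]
            abel }
    have φa : ∀ x v, φ.app x v = τ.ι.app x (inn k n ε i' j' x (val k n ε a b x v)) +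
        (e l0)⁻¹ • s x (inn k n ε i j x (val k n ε a b x v)) := fun _ _ => rfl
    have πφ : ∀ x v, τ.π.app x (φ.app x v) =
        (e l0)⁻¹ • inn k n ε i j x (val k n ε a b x v) := by
      intro x v
      rw [φa, map_add, τ.pi_iota, zero_add, map_smul, hs]
    refine ⟨φ, fun x => ⟨?_, ?_⟩, ?_, πφ⟩
    · rw [inj_iff]
      intro v hv
      have p1 := πφ x v
      rw [hv, map_zero] at p1
      have p2 : inn k n ε i j x (val k n ε a b x v) = 0 :=
        (smul_eq_zero.1 p1.symm).resolve_left hc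
      have p3 := φa x v
      rw [hv, p2, map_zero, smul_zero, add_zero] at p3
      have p4 : inn k n ε i' j' x (val k n ε a b x v) = 0 :=
        τ.inj x (by rw [← p3, map_zero])
      have p5 := congrArg (val k n ε i j x) p2
      have p6 := congrArg (val k n ε i' j' x) p4
      rw [val_inn, map_zero] at p5 p6
      by_cases hx : SuppCond n i j x
      · rw [if_pos hx] at p5
        exact val_inj (by rw [p5, map_zero])
      by_cases hy : SuppCond n i' j' x
      · rw [if_pos hy] at p6
        exact val_inj (by rw [p6, map_zero])
      · exact eq_zero_off (by rw [hU]; tauto) v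
    · intro w
      obtain ⟨u, hu⟩ := (τ.exct x (w - s x (τ.π.app x w))).1 (by rw [map_sub, hs, sub_self])
      refine ⟨inn k n ε a b x (val k n ε i' j' x u + e l0 * val k n ε i j x (τ.π.app x w)), ?_⟩
      have q1 : inn k n ε i' j' x (val k n ε a b x (inn k n ε a b x
          (val k n ε i' j' x u + e l0 * val k n ε i j x (τ.π.app x w)))) = u := by
        apply val_inj
        rw [val_inn, val_inn]
        by_cases hy : SuppCond n i' j' x
        · rw [val_off (fun h => hd x h hy)]
          simp [hy, hU]
        · rw [if_neg hy, val_off hy]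
      have q2 : inn k n ε i j x (val k n ε a b x (inn k n ε a b x
          (val k n ε i' j' x u + e l0 * val k n ε i j x (τ.π.app x w)))) =
          e l0 • τ.π.app x w := by
        apply val_inj
        rw [val_inn, val_inn, map_smul]
        by_cases hy : SuppCond n i j x
        · rw [val_off (hd x hy)]
          simp [hy, hU]
        · rw [if_neg hy, val_off hy, smul_zero]
      rw [φa, q1, q2, map_smul, smul_smul, inv_mul_cancel₀ he, one_smul, hu]
      abel
    · intro x v
      rw [φa]
      have q1 : inn k n ε i' j' x (val k n ε a b x (α.app x v)) = v := by
        apply val_inj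
        simp only [α, can_app, val_inn]
        by_cases hy : SuppCond n i' j' x
        · simp [hy, hU]
        · rw [if_neg hy, val_off hy]
      have q2 : inn k n ε i j x (val k n ε a b x (α.app x v)) = 0 := by
        apply val_inj
        simp only [α, can_app, val_inn, map_zero]
        by_cases hy : SuppCond n i j x
        · rw [val_off (hd x hy)]; simp
        · rw [if_neg hy]
      change τ.ι.app x (inn k n ε i' j' x (val k n ε a b x (α.app x v))) +
        (e l0)⁻¹ • s x (inn k n ε i j x (val k n ε a b x (α.app x v))) = _
      rw [q1, q2, map_zero, smul_zero, add_zero]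

lemma good_iff {i j i' j' : ℕ} (h1 : 1 ≤ i) (h2 : i ≤ j) (h3 : j ≤ n + 2)
    (h4 : 1 ≤ i') (h5 : i' ≤ j') (h6 : j' ≤ n + 2) :
    Good (intervalRep k n ε i j) (intervalRep k n ε i' j') ↔ ¬Ext2 ε i j i' j' := by
  constructor
  · intro h hX
    exact not_good h1 h2 h3 h4 h5 h6 hX h
  · intro hX
    by_cases ha : j + 1 = i' ∧ ε j = true
    · right
      have hk : ∀ l, ε l = false → l ≠ j := by
        rintro l hl rfl
        simp [ha.2] at hl
      refine adjacent_aux (a := i) (b := j') (l0 := j) h1 h2 h3 h4 h5 h6 h1 (by omega) h6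
        (by simp; omega) ?_ ?_ ?_ ?_ ?_ ?_ <;> simp only [SuppCond] <;> intro l
      any_goals intro hl
      all_goals first | (have := hk l (by assumption); omega) | omega
    by_cases hb : j' + 1 = i ∧ ε j' = false
    · right
      have hk : ∀ l, ε l = true → l ≠ j' := by
        rintro l hl rfl
        simp [hb.2] at hl
      refine adjacent_aux (a := i') (b := j) (l0 := j') h1 h2 h3 h4 h5 h6 h4 (by omega) h3
        (by simp; omega) ?_ ?_ ?_ ?_ ?_ ?_ <;> simp only [SuppCond] <;> intro l
      any_goals intro hl
      all_goals first | (have := hk l (by assumption); omega) | omega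
    · exact Or.inl (extZero_of h1 h2 h3 h4 h5 h6 hX ha hb)

lemma good_self {i j : ℕ} (h1 : 1 ≤ i) (h2 : i ≤ j) (h3 : j ≤ n + 2) :
    Good (intervalRep k n ε i j) (intervalRep k n ε i j) := by
  rw [good_iff h1 h2 h3 h1 h2 h3]
  rintro ⟨_, _, h, _⟩
  omega

end Adjacent
/-! ### Geometry -/

section Geometry

variable {n : ℕ} {ε : ℕ → Bool} {p : ℕ → ℂ}

/-- The height of the line through `u` and `v` above the abscissa `t`. -/
def ht (u v : ℂ) (t : ℝ) : ℝ := u.im + (v.im - u.im) / (v.re - u.re) * (t - u.re)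

lemma ht_left (u v : ℂ) : ht u v u.re = u.im := by simp [ht]

lemma ht_right {u v : ℂ} (h : u.re < v.re) : ht u v v.re = v.im := by
  have : v.re - u.re ≠ 0 := by linarith
  unfold ht
  rw [div_mul_cancel₀ _ this]; ring

lemma mem_seg_iff {u v : ℂ} (h : u.re < v.re) (z : ℂ) :
    z ∈ segment ℝ u v ↔ u.re ≤ z.re ∧ z.re ≤ v.re ∧ z.im = ht u v z.re := by
  have h0 : 0 < v.re - u.re := by linarith
  constructor
  · rintro ⟨a, b, ha, hb, hab, rfl⟩
    obtain rfl : a = 1 - b := by linarith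
    simp only [Complex.add_re, Complex.add_im, Complex.smul_re, Complex.smul_im, smul_eq_mul]
    refine ⟨by nlinarith, by nlinarith, ?_⟩
    unfold ht
    field_simp
    ring
  · rintro ⟨h1, h2, h3⟩
    refine ⟨(v.re - z.re) / (v.re - u.re), (z.re - u.re) / (v.re - u.re),
      div_nonneg (by linarith) h0.le, div_nonneg (by linarith) h0.le, ?_, ?_⟩
    · rw [← add_div, div_eq_one_iff_eq h0.ne']; ring
    · apply Complex.ext
      · simp only [Complex.add_re, Complex.smul_re, smul_eq_mul]
        field_simp
        ring
      · simp only [Complex.add_im, Complex.smul_im, smul_eq_mul]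
        rw [h3]
        unfold ht
        field_simp
        ring

lemma mem_vert {H : Set ℂ} (hH : Convex ℝ H) {t y1 y2 y : ℝ} (h1 : (⟨t, y1⟩ : ℂ) ∈ H)
    (h2 : (⟨t, y2⟩ : ℂ) ∈ H) (h3 : y1 ≤ y) (h4 : y ≤ y2) : (⟨t, y⟩ : ℂ) ∈ H := by
  rcases eq_or_lt_of_le (h3.trans h4) with h | h
  · obtain rfl : y = y1 := by linarith
    exact h1
  · have h0 : 0 < y2 - y1 := by linarith
    have := hH h1 h2 (a := (y2 - y) / (y2 - y1)) (b := (y - y1) / (y2 - y1))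
      (div_nonneg (by linarith) h0.le) (div_nonneg (by linarith) h0.le)
      (by rw [← add_div, div_eq_one_iff_eq h0.ne']; ring)
    convert this using 1
    apply Complex.ext
    · simp only [Complex.add_re, Complex.smul_re, smul_eq_mul]
      field_simp
      ring
    · simp only [Complex.add_im, Complex.smul_im, smul_eq_mul]
      field_simp
      ring

lemma above (hp : PolyPts n ε p) {a x b : ℕ} (hax : a < x) (hxb : x < b) (hb : b ≤ n + 2) :
    (ε x = true → ht (p a) (p b) (p x).re < (p x).im) ∧
      (ε x = false → (p x).im < ht (p a) (p b) (p x).re) := by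
  obtain ⟨P1, P2, P3, P4⟩ := hp
  set S := p '' {j | j ≤ n + 2 ∧ j ≠ x} with hS
  have hH : Convex ℝ (convexHull ℝ S) := convex_convexHull ℝ S
  have hm : ∀ c, c ≤ n + 2 → c ≠ x → p c ∈ convexHull ℝ S := fun c h1 h2 =>
    subset_convexHull ℝ S ⟨c, ⟨h1, h2⟩, rfl⟩
  have r1 := P1 a x hax (by omega)
  have r2 := P1 x b hxb hb
  have r3 := P1 0 x (by omega) (by omega)
  have r4 := P1 x (n + 2) (by omega) le_rfl
  have q1 : (⟨(p x).re, ht (p a) (p b) (p x).re⟩ : ℂ) ∈ convexHull ℝ S := by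
    apply hH.segment_subset (hm a (by omega) (by omega)) (hm b hb (by omega))
    rw [mem_seg_iff (by linarith)]
    exact ⟨r1.le, r2.le, rfl⟩
  have q2 : (⟨(p x).re, (p 0).im⟩ : ℂ) ∈ convexHull ℝ S := by
    apply hH.segment_subset (hm 0 (by omega) (by omega)) (hm (n + 2) le_rfl (by omega))
    rw [mem_seg_iff (by linarith)]
    exact ⟨r3.le, r4.le, by simp [ht, P2]⟩
  have hx := P3 x (by omega) (by omega)
  have hno := P4 x (by omega)
  constructor
  · intro h
    by_contra hc
    exact hno (mem_vert hH q2 q1 (hx.1 h).le (not_lt.1 hc))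
  · intro h
    by_contra hc
    exact hno (mem_vert hH q1 q2 (not_lt.1 hc) (hx.2 h).le)

lemma ht_affine (u v u' v' : ℂ) (s t c : ℝ) :
    (ht u v c - ht u' v' c) * (t - s) =
      (ht u v s - ht u' v' s) * (t - c) + (ht u v t - ht u' v' t) * (c - s) := by
  unfold ht; ring

/-- The left sign. -/
lemma left_sign (hp : PolyPts n ε p) {a b c d : ℕ} (hab : a < b) (hb : b ≤ n + 2)
    (hcd : c < d) (hd : d ≤ n + 2) (hcb : c < b) (had : a < d) :
    (((a < c ∧ ε c = true) ∨ (c < a ∧ ε a = false)) ∧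
      ht (p a) (p b) (p (max a c)).re - ht (p c) (p d) (p (max a c)).re < 0) ∨
    (((c < a ∧ ε a = true) ∨ (a < c ∧ ε c = false)) ∧
      0 < ht (p a) (p b) (p (max a c)).re - ht (p c) (p d) (p (max a c)).re) ∨
    (a = c ∧ ht (p a) (p b) (p (max a c)).re - ht (p c) (p d) (p (max a c)).re = 0) := by
  rcases lt_trichotomy a c with h | h | h
  · have := above hp h hcb hb
    rw [max_eq_right h.le, ht_left]
    cases hc : ε c with
    | true => left; exact ⟨Or.inl ⟨h, rfl⟩, by linarith [this.1 hc]⟩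
    | false => right; left; exact ⟨Or.inr ⟨h, rfl⟩, by linarith [this.2 hc]⟩
  · subst h
    right; right
    rw [max_self, ht_left, ht_left]
    exact ⟨rfl, sub_self _⟩
  · have := above hp h had hd
    rw [max_eq_left h.le, ht_left]
    cases hc : ε a with
    | true => right; left; exact ⟨Or.inl ⟨h, rfl⟩, by linarith [this.1 hc]⟩
    | false => left; exact ⟨Or.inr ⟨h, rfl⟩, by linarith [this.2 hc]⟩

/-- The right sign. -/
lemma right_sign (hp : PolyPts n ε p) {a b c d : ℕ} (hab : a < b) (hb : b ≤ n + 2)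
    (hcd : c < d) (hd : d ≤ n + 2) (hcb : c < b) (had : a < d) :
    (((d < b ∧ ε d = false) ∨ (b < d ∧ ε b = true)) ∧
      0 < ht (p a) (p b) (p (min b d)).re - ht (p c) (p d) (p (min b d)).re) ∨
    (((b < d ∧ ε b = false) ∨ (d < b ∧ ε d = true)) ∧
      ht (p a) (p b) (p (min b d)).re - ht (p c) (p d) (p (min b d)).re < 0) ∨
    (b = d ∧ ht (p a) (p b) (p (min b d)).re - ht (p c) (p d) (p (min b d)).re = 0) := by
  have x1 := hp.1 a b hab hb
  have x2 := hp.1 c d hcd hd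
  rcases lt_trichotomy b d with h | h | h
  · have := above hp hcb h hd
    rw [min_eq_left h.le, ht_right x1]
    cases hc : ε b with
    | true => left; exact ⟨Or.inr ⟨h, rfl⟩, by linarith [this.1 hc]⟩
    | false => right; left; exact ⟨Or.inl ⟨h, rfl⟩, by linarith [this.2 hc]⟩
  · subst h
    right; right
    rw [min_self, ht_right x1, ht_right x2]
    exact ⟨rfl, sub_self _⟩
  · have := above hp had h hb
    rw [min_eq_right h.le, ht_right x2]
    cases hc : ε d with
    | true => right; left; exact ⟨Or.inr ⟨h, rfl⟩, by linarith [this.1 hc]⟩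
    | false => left; exact ⟨Or.inl ⟨h, rfl⟩, by linarith [this.2 hc]⟩

lemma re_le_iff (hp : PolyPts n ε p) {a b : ℕ} (ha : a ≤ n + 2) (hb : b ≤ n + 2) :
    (p a).re ≤ (p b).re ↔ a ≤ b := by
  constructor
  · intro h
    by_contra hc
    have := hp.1 b a (by omega) ha
    linarith
  · intro h
    rcases h.eq_or_lt with rfl | h
    · exact le_rfl
    · exact (hp.1 a b h hb).le

lemma cross_iff (hp : PolyPts n ε p) {a b c d : ℕ} (hab : a < b) (hb : b ≤ n + 2)
    (hcd : c < d) (hd : d ≤ n + 2) (hne : ¬(a = c ∧ b = d)) :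
    Cross p (a, b) (c, d) ↔ c < b ∧ a < d ∧
      ((((a < c ∧ ε c = true) ∨ (c < a ∧ ε a = false)) ∧
        ((d < b ∧ ε d = false) ∨ (b < d ∧ ε b = true))) ∨
      (((c < a ∧ ε a = true) ∨ (a < c ∧ ε c = false)) ∧
        ((b < d ∧ ε b = false) ∨ (d < b ∧ ε d = true)))) := by
  have x1 := hp.1 a b hab hb
  have x2 := hp.1 c d hcd hd
  have hmem : ∀ z : ℂ, (z ∈ Seg p (a, b) ∧ z ∈ Seg p (c, d)) ↔
      ((p a).re ≤ z.re ∧ z.re ≤ (p b).re ∧ z.im = ht (p a) (p b) z.re) ∧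
      ((p c).re ≤ z.re ∧ z.re ≤ (p d).re ∧ z.im = ht (p c) (p d) z.re) := fun z =>
    and_congr (mem_seg_iff x1 z) (mem_seg_iff x2 z)
  by_cases hov : c < b ∧ a < d
  swap
  · refine iff_of_false ?_ (fun h => hov ⟨h.1, h.2.1⟩)
    rintro ⟨z, z1, z2, z3⟩
    obtain ⟨⟨e1, e2, e3⟩, e4, e5, e6⟩ := (hmem z).1 ⟨z1, z2⟩
    have k1 : c ≤ b := (re_le_iff hp (by omega) hb).1 (e4.trans e2)
    have k2 : a ≤ d := (re_le_iff hp (by omega) hd).1 (e1.trans e5)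
    apply z3
    by_cases h : c = b
    · subst h
      have hz : z.re = (p c).re := le_antisymm e2 e4
      have : z = p c := Complex.ext hz (by rw [e6, hz, ht_left])
      exact ⟨Or.inr this, Or.inl this⟩
    · obtain rfl : a = d := by omega
      have hz : z.re = (p a).re := le_antisymm e5 e1
      have : z = p a := Complex.ext hz (by rw [e3, hz, ht_left])
      exact ⟨Or.inl this, Or.inr this⟩
  obtain ⟨o1, o2⟩ := hov
  have hLR : (p (max a c)).re < (p (min b d)).re := hp.1 _ _ (by omega) (by omega)
  have aL : (p a).re ≤ (p (max a c)).re :=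
    (re_le_iff hp (by omega) (by omega)).2 (le_max_left _ _)
  have cL : (p c).re ≤ (p (max a c)).re :=
    (re_le_iff hp (by omega) (by omega)).2 (le_max_right _ _)
  have bR : (p (min b d)).re ≤ (p b).re :=
    (re_le_iff hp (by omega) (by omega)).2 (min_le_left _ _)
  have dR : (p (min b d)).re ≤ (p d).re :=
    (re_le_iff hp (by omega) (by omega)).2 (min_le_right _ _)
  have haff := ht_affine (p a) (p b) (p c) (p d) (p (max a c)).re (p (min b d)).re
  have hLs := left_sign hp hab hb hcd hd o1 o2
  have hRs := right_sign hp hab hb hcd hd o1 o2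
  -- opposite signs give a crossing
  have hyes : (ht (p a) (p b) (p (max a c)).re - ht (p c) (p d) (p (max a c)).re) *
      (ht (p a) (p b) (p (min b d)).re - ht (p c) (p d) (p (min b d)).re) < 0 →
      Cross p (a, b) (c, d) := by
    intro hneg
    set s := (p (max a c)).re
    set t := (p (min b d)).re
    set A := ht (p a) (p b) s - ht (p c) (p d) s
    set B := ht (p a) (p b) t - ht (p c) (p d) t
    have hAB : 0 < (A - B) ^ 2 := by
      have : A - B ≠ 0 := by
        intro h
        have hAB' : A = B := by linarith
        rw [hAB'] at hneg
        linarith [mul_self_nonneg B]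
      positivity
    have hABne : A - B ≠ 0 := by
      intro h; rw [h] at hAB; simp at hAB
    -- the abscissa of the crossing
    set m := s + A / (A - B) * (t - s) with hm
    have w1 : 0 < A / (A - B) := by
      have : A / (A - B) = (A ^ 2 - A * B) / (A - B) ^ 2 := by field_simp
      rw [this]
      exact div_pos (by nlinarith [sq_nonneg A]) hAB
    have w2 : A / (A - B) < 1 := by
      have : A / (A - B) = 1 - (B ^ 2 - A * B) / (A - B) ^ 2 := by field_simp; ring
      rw [this]
      have : 0 < (B ^ 2 - A * B) / (A - B) ^ 2 := div_pos (by nlinarith [sq_nonneg B]) hAB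
      linarith
    have m1 : s < m := by
      have := mul_pos w1 (sub_pos.2 hLR)
      linarith
    have m2 : m < t := by
      have := mul_pos (sub_pos.2 w2) (sub_pos.2 hLR)
      nlinarith
    have m3 : ht (p a) (p b) m - ht (p c) (p d) m = 0 := by
      have h := haff m
      have : A * (t - m) + B * (m - s) = 0 := by
        rw [hm]; field_simp; ring
      rw [this] at h
      rcases mul_eq_zero.1 h with h | h
      · exact h
      · linarith
    refine ⟨⟨m, ht (p a) (p b) m⟩, ?_⟩
    rw [← and_assoc]
    refine ⟨(hmem _).2 ⟨⟨by simp only; linarith, by simp only; linarith, rfl⟩,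
      by simp only; linarith, by simp only; linarith, by simp only; linarith⟩, ?_⟩
    rintro ⟨h | h, -⟩
    · have := congrArg Complex.re h
      simp only at this
      linarith
    · have := congrArg Complex.re h
      simp only at this
      linarith
  -- a crossing gives opposite signs
  have hno : Cross p (a, b) (c, d) →
      (ht (p a) (p b) (p (max a c)).re - ht (p c) (p d) (p (max a c)).re) *
      (ht (p a) (p b) (p (min b d)).re - ht (p c) (p d) (p (min b d)).re) < 0 := by
    rintro ⟨z, z1, z2, z3⟩
    obtain ⟨⟨e1, e2, e3⟩, e4, e5, e6⟩ := (hmem z).1 ⟨z1, z2⟩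
    have f1 : (p (max a c)).re ≤ z.re := by
      rcases max_choice a c with h | h <;> rw [h] <;> assumption
    have f2 : z.re ≤ (p (min b d)).re := by
      rcases min_choice b d with h | h <;> rw [h] <;> assumption
    have h := haff z.re
    rw [← e3, ← e6, sub_self, zero_mul] at h
    -- the left endpoint
    have g1 : a = c → False := by
      rintro rfl
      have hR : ht (p a) (p b) (p (min b d)).re - ht (p a) (p d) (p (min b d)).re ≠ 0 := by
        rcases hRs with ⟨_, h⟩ | ⟨_, h⟩ | ⟨h, _⟩
        · exact h.ne'
        · exact h.ne
        · exact absurd ⟨rfl, h⟩ hne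
      rw [max_self, ht_left, ht_left, sub_self, zero_mul, zero_add] at h
      have hz : z.re = (p a).re := by
        have := (mul_eq_zero.1 h.symm).resolve_left hR
        linarith
      have : z = p a := Complex.ext hz (by rw [e3, hz, ht_left])
      exact z3 ⟨Or.inl this, Or.inl this⟩
    have g2 : b = d → False := by
      rintro rfl
      have hL : ht (p a) (p b) (p (max a c)).re - ht (p c) (p b) (p (max a c)).re ≠ 0 := by
        rcases hLs with ⟨_, h⟩ | ⟨_, h⟩ | ⟨h, _⟩
        · exact h.ne
        · exact h.ne'
        · exact absurd ⟨h, rfl⟩ hne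
      rw [min_self, ht_right x1, ht_right x2, sub_self, zero_mul, add_zero] at h
      have hz : z.re = (p b).re := by
        have := (mul_eq_zero.1 h.symm).resolve_left hL
        linarith
      have : z = p b := Complex.ext hz (by rw [e3, hz, ht_right x1])
      exact z3 ⟨Or.inr this, Or.inr this⟩
    have k1 : 0 ≤ (p (min b d)).re - z.re := by linarith
    have k2 : 0 ≤ z.re - (p (max a c)).re := by linarith
    have k3 : 0 < ((p (min b d)).re - z.re) + (z.re - (p (max a c)).re) := by linarith
    rcases hLs with ⟨_, hL⟩ | ⟨_, hL⟩ | ⟨hL, _⟩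
    · rcases hRs with ⟨_, hR⟩ | ⟨_, hR⟩ | ⟨hR, _⟩
      · exact mul_neg_of_neg_of_pos hL hR
      · exfalso
        rcases k1.eq_or_lt with k | k
        · rw [← k] at h k3
          nlinarith
        · nlinarith
      · exact (g2 hR).elim
    · rcases hRs with ⟨_, hR⟩ | ⟨_, hR⟩ | ⟨hR, _⟩
      · exfalso
        rcases k1.eq_or_lt with k | k
        · rw [← k] at h k3
          nlinarith
        · nlinarith
      · exact mul_neg_of_pos_of_neg hL hR
      · exact (g2 hR).elim
    · exact (g1 hL).elim
  constructor
  · intro hC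
    have hneg := hno hC
    refine ⟨o1, o2, ?_⟩
    rcases hLs with ⟨p1, hL⟩ | ⟨p1, hL⟩ | ⟨_, hL⟩
    · rcases hRs with ⟨p2, hR⟩ | ⟨p2, hR⟩ | ⟨_, hR⟩
      · exact Or.inl ⟨p1, p2⟩
      · exact absurd (mul_pos_of_neg_of_neg hL hR) hneg.le.not_gt
      · rw [hR, mul_zero] at hneg; exact absurd hneg (lt_irrefl _)
    · rcases hRs with ⟨p2, hR⟩ | ⟨p2, hR⟩ | ⟨_, hR⟩
      · exact absurd (mul_pos hL hR) hneg.le.not_gt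
      · exact Or.inr ⟨p1, p2⟩
      · rw [hR, mul_zero] at hneg; exact absurd hneg (lt_irrefl _)
    · rw [hL, zero_mul] at hneg; exact absurd hneg (lt_irrefl _)
  · rintro ⟨-, -, h⟩
    apply hyes
    have i1 : ∀ {x : ℕ}, ε x = true → ε x = false → False := by
      intro x h1 h2; rw [h1] at h2; simp at h2
    rcases h with ⟨l, r⟩ | ⟨l, r⟩
    · have hL : ht (p a) (p b) (p (max a c)).re - ht (p c) (p d) (p (max a c)).re < 0 := by
        rcases hLs with ⟨_, hL⟩ | ⟨p1, _⟩ | ⟨hL, _⟩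
        · exact hL
        · exfalso
          rcases l with ⟨l1, l2⟩ | ⟨l1, l2⟩ <;> rcases p1 with ⟨q1, q2⟩ | ⟨q1, q2⟩ <;>
            first | omega | exact i1 l2 q2 | exact i1 q2 l2
        · omega
      have hR : 0 < ht (p a) (p b) (p (min b d)).re - ht (p c) (p d) (p (min b d)).re := by
        rcases hRs with ⟨_, hR⟩ | ⟨p1, _⟩ | ⟨hR, _⟩
        · exact hR
        · exfalso
          rcases r with ⟨l1, l2⟩ | ⟨l1, l2⟩ <;> rcases p1 with ⟨q1, q2⟩ | ⟨q1, q2⟩ <;>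
            first | omega | exact i1 l2 q2 | exact i1 q2 l2
        · omega
      exact mul_neg_of_neg_of_pos hL hR
    · have hL : 0 < ht (p a) (p b) (p (max a c)).re - ht (p c) (p d) (p (max a c)).re := by
        rcases hLs with ⟨p1, _⟩ | ⟨_, hL⟩ | ⟨hL, _⟩
        · exfalso
          rcases l with ⟨l1, l2⟩ | ⟨l1, l2⟩ <;> rcases p1 with ⟨q1, q2⟩ | ⟨q1, q2⟩ <;>
            first | omega | exact i1 l2 q2 | exact i1 q2 l2
        · exact hL
        · omega
      have hR : ht (p a) (p b) (p (min b d)).re - ht (p c) (p d) (p (min b d)).re < 0 := by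
        rcases hRs with ⟨p1, _⟩ | ⟨_, hR⟩ | ⟨hR, _⟩
        · exfalso
          rcases r with ⟨l1, l2⟩ | ⟨l1, l2⟩ <;> rcases p1 with ⟨q1, q2⟩ | ⟨q1, q2⟩ <;>
            first | omega | exact i1 l2 q2 | exact i1 q2 l2
        · exact hR
        · omega
      exact mul_neg_of_pos_of_neg hL hR

lemma cross_iff_ext (hp : PolyPts n ε p) {i j i' j' : ℕ}
    (h1 : 1 ≤ i) (h2 : i ≤ j) (h3 : j ≤ n + 2)
    (h4 : 1 ≤ i') (h5 : i' ≤ j') (h6 : j' ≤ n + 2) (hne : (i, j) ≠ (i', j')) :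
    Cross p (i - 1, j) (i' - 1, j') ↔ Ext2 ε i j i' j' ∨ Ext2 ε i' j' i j := by
  have hne' : ¬(i - 1 = i' - 1 ∧ j = j') := by
    rintro ⟨h, h'⟩
    exact hne (Prod.ext (by simp only; omega) h')
  rw [cross_iff hp (by omega) h3 (by omega) h6 hne']
  have k1 : i' - 1 < j ↔ i' ≤ j := by omega
  have k2 : i - 1 < j' ↔ i ≤ j' := by omega
  have k3 : i - 1 < i' - 1 ↔ i < i' := by omega
  have k4 : i' - 1 < i - 1 ↔ i' < i := by omega
  rw [k1, k2, k3, k4]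
  unfold Ext2
  constructor
  · rintro ⟨c1, c2, ⟨p1, p2⟩ | ⟨p1, p2⟩⟩
    · exact Or.inl ⟨c1, c2, p1, p2⟩
    · exact Or.inr ⟨c2, c1, p1, p2⟩
  · rintro (⟨c1, c2, p1, p2⟩ | ⟨c2, c1, p1, p2⟩)
    · exact ⟨c1, c2, Or.inl ⟨p1, p2⟩⟩
    · exact ⟨c1, c2, Or.inr ⟨p1, p2⟩⟩

end Geometry
/-- for non-isomorphic indecomposables `M(i,j)`, `M(i′,j′)`, the direct sum
`M(i,j) ⊕ M(i′,j′)` is almost rigid iff `γ(i−1,j)` and `γ(i′−1,j′)` do not cross. -/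
theorem stmt_12 (k : Type) [Field k] (n : ℕ) (ε : ℕ → Bool) (p : ℕ → ℂ)
    (hp : PolyPts n ε p) (i j i' j' : ℕ)
    (h1 : 1 ≤ i) (h2 : i ≤ j) (h3 : j ≤ n + 2)
    (h4 : 1 ≤ i') (h5 : i' ≤ j') (h6 : j' ≤ n + 2) (hne : (i, j) ≠ (i', j')) :
    AlmostRigid ((intervalRep k n ε i j).dsum (intervalRep k n ε i' j')) ↔
      ¬Cross p (i - 1, j) (i' - 1, j') := by
  rw [almostRigid_iff h1 h2 h3 h4 h5 h6 hne (good_self h1 h2 h3) (good_self h4 h5 h6),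
    good_iff h1 h2 h3 h4 h5 h6, good_iff h4 h5 h6 h1 h2 h3,
    cross_iff_ext hp h1 h2 h3 h4 h5 h6 hne, not_or]

end CambrianA
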